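/- Let m, d ∈ ℕ with d ≥ m, and let X = (X₁,…,Xₙ) be a standard Gaussian random vector in ℝⁿ (i.i.d. N(0,1) coordinates). Then there exists a constant C(m,d) > 0, depending only on m and d, such that for every non-constant polynomial f(x) = Σ_{j₁=0}^{m} … Σ_{jₙ=0}^{m} a_{j₁,…,jₙ} x₁^{j₁}⋯xₙ^{jₙ} in which every variable appears to a power at most m and whose total degree d[f] := max{j₁+…+jₙ : a_{j₁,…,jₙ} ≠ 0} satisfies d[f] ≤ d, the distribution of f(X) has a density ϱ_f and ω(ϱ_f, ε) ≤ C(m,d) (ε/a[f])^{1/m} [ |ln(ε/a[f])|^{d−m} + 1 ] for every ε > 0, where a[f] := max_{j₁+…+jₙ = d[f]} |a_{j₁,…,jₙ}|. -/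

import Mathlib

open MeasureTheory ProbabilityTheory

/-- The `L¹` modulus of continuity `ω(ϱ, ε) = sup_{|h| ≤ ε} ∫ |ϱ(s+h) − ϱ(s)| ds`. -/
noncomputable def omegaMod (ρ : ℝ → ℝ) (ε : ℝ) : ℝ :=
  sSup {r : ℝ | ∃ h : ℝ, |h| ≤ ε ∧ r = ∫ s : ℝ, |ρ (s + h) - ρ s|}

/-- The standard Gaussian measure on `ℝⁿ` (i.i.d. `N(0,1)` coordinates). -/
noncomputable def stdGaussian (n : ℕ) : Measure (Fin n → ℝ) :=
  Measure.pi fun _ => gaussianReal 0 1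

/-- `a[f]`: the maximum of the absolute values of the coefficients of the monomials of
top total degree of `f`. -/
noncomputable def topCoeff {n : ℕ} (f : MvPolynomial (Fin n) ℝ) : ℝ :=
  sSup {c : ℝ | ∃ j : Fin n →₀ ℕ, (j.sum fun _ e => e) = f.totalDegree ∧
    c = |MvPolynomial.coeff j f|}

/-!
The smoothness of a measure `μ` on the line at scale `ε` is measured by the largest value of
`|∫ φ' dμ|` over `C¹` functions with `|φ| ≤ ε` and `|φ'| ≤ 1`. For `φ s = ∫ t in s..s+h, ψ t` with
`0 ≤ ψ ≤ 1` and `|h| ≤ ε` this compares `μ` with its translate by `h` in total variation, so a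
bound that tends to `0` with `ε` yields both a density and its `L¹` modulus of continuity.

For the law of `p(Z)` with `Z` Gaussian and `q = p'`, write `1 = q² / (q² + δ²) + δ² / (q² + δ²)`.
The first part times `φ'(p)` equals `(φ ∘ p)' q / (q² + δ²)` and is integrated by parts: the
fraction `q / (q² + δ²)` is at most `1 / (2δ)` and has few critical points, hence variation
`O(1 / δ)`. The second part lives where `q` is small, which has small probability because `q`
splits over `ℂ` and the size of its coefficients is controlled by the Mahler measure. Optimising
`δ` gives the exponent `1/m`.

In several variables the component of `X` along a unit vector is independent of the rest and may
be resampled, so the estimate in one variable applies on lines. If the total degree `D` is at most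
`m`, the top homogeneous part is comparable with `a[f]` in a direction that depends only on `f`,
and lines in this direction give the bound without a logarithm. If `D > m`, one differentiates
along the variables of a top monomial until the degree drops to `m`: each derivative is controlled
through averages along lines, at the cost of one factor `1 + log (a[f] / ε)`, and `D - m` of them
are needed.
-/

/-! ### Small ball estimate for a polynomial in one Gaussian variable -/

section CoeffNorm

variable {R S : Type*}

/-- The sum of the norms of the coefficients of a polynomial. It measures the size of a polynomial
in one variable, in the role that `topCoeff` plays in several variables. -/
noncomputable def coeffNorm [SeminormedRing R] (p : Polynomial R) : ℝ :=
  p.sum fun _ c => ‖c‖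

lemma coeffNorm_eq_sum_range [SeminormedRing R] {p : Polynomial R} {n : ℕ} (hn : p.natDegree < n) :
    coeffNorm p = ∑ i ∈ Finset.range n, ‖p.coeff i‖ :=
  p.sum_over_range' (fun _ => norm_zero) n hn

lemma coeffNorm_nonneg [SeminormedRing R] (p : Polynomial R) : 0 ≤ coeffNorm p :=
  Finset.sum_nonneg fun _ _ => norm_nonneg _

lemma norm_coeff_le_coeffNorm [SeminormedRing R] (p : Polynomial R) (i : ℕ) :
    ‖p.coeff i‖ ≤ coeffNorm p := by
  rw [coeffNorm_eq_sum_range (n := p.natDegree + i + 1) (by omega)]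
  exact Finset.single_le_sum (f := fun i => ‖p.coeff i‖) (fun _ _ => norm_nonneg _)
    (Finset.mem_range.mpr (by omega))

lemma coeffNorm_pos [NormedRing R] {p : Polynomial R} (hp : p ≠ 0) : 0 < coeffNorm p :=
  (norm_pos_iff.mpr (Polynomial.leadingCoeff_ne_zero.mpr hp)).trans_le
    (norm_coeff_le_coeffNorm p p.natDegree)

lemma norm_eval_le_coeffNorm [SeminormedRing R] [NormOneClass R] (p : Polynomial R) {x : R}
    (hx : ‖x‖ ≤ 1) : ‖p.eval x‖ ≤ coeffNorm p := by
  rw [Polynomial.eval_eq_sum_range, coeffNorm_eq_sum_range p.natDegree.lt_succ_self]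
  refine (norm_sum_le _ _).trans (Finset.sum_le_sum fun i _ => (norm_mul_le _ _).trans ?_)
  exact mul_le_of_le_one_right (norm_nonneg _)
    ((norm_pow_le x i).trans (pow_le_one₀ (norm_nonneg _) hx))

lemma coeffNorm_derivative_le [SeminormedRing R] (p : Polynomial R) :
    coeffNorm p.derivative ≤ p.natDegree * coeffNorm p := by
  have hcoeff : ∀ i ∈ Finset.range p.natDegree,
      ‖p.derivative.coeff i‖ ≤ p.natDegree * ‖p.coeff (i + 1)‖ := by
    intro i hi
    rw [Polynomial.coeff_derivative, ← Nat.cast_succ, ← Nat.cast_comm, ← nsmul_eq_mul]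
    refine norm_nsmul_le.trans ?_
    gcongr
    exact_mod_cast Finset.mem_range.mp hi
  rcases Nat.eq_zero_or_pos p.natDegree with hp | hp
  · rw [Polynomial.derivative_of_natDegree_zero hp, coeffNorm, Polynomial.sum_zero_index]
    exact mul_nonneg (Nat.cast_nonneg _) (coeffNorm_nonneg p)
  rw [coeffNorm_eq_sum_range (Polynomial.natDegree_derivative_lt hp.ne'),
    coeffNorm_eq_sum_range p.natDegree.lt_succ_self, Finset.sum_range_succ', mul_add,
    Finset.mul_sum]
  exact (Finset.sum_le_sum hcoeff).trans (le_add_of_nonneg_right (by positivity))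

lemma coeffNorm_map_algebraMap [NormedField R] [NormedRing S] [NormedAlgebra R S] [NormOneClass S]
    (p : Polynomial R) : coeffNorm (p.map (algebraMap R S)) = coeffNorm p := by
  rw [coeffNorm_eq_sum_range (Nat.lt_succ_of_le Polynomial.natDegree_map_le),
    coeffNorm_eq_sum_range p.natDegree.lt_succ_self]
  simp only [Polynomial.coeff_map, norm_algebraMap']

lemma coeffNorm_le_two_pow_mul_mahlerMeasure (p : Polynomial ℂ) :
    coeffNorm p ≤ 2 ^ p.natDegree * p.mahlerMeasure := by
  rw [coeffNorm_eq_sum_range p.natDegree.lt_succ_self]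
  calc ∑ i ∈ Finset.range (p.natDegree + 1), ‖p.coeff i‖
      ≤ ∑ i ∈ Finset.range (p.natDegree + 1), p.natDegree.choose i * p.mahlerMeasure :=
        Finset.sum_le_sum fun i _ => p.norm_coeff_le_choose_mul_mahlerMeasure i
    _ = 2 ^ p.natDegree * p.mahlerMeasure := by
        rw [← Finset.sum_mul, ← Nat.cast_sum, Nat.sum_range_choose, Nat.cast_pow, Nat.cast_ofNat]

end CoeffNorm

section SmallBall

lemma norm_eval_eq_prod_roots (p : Polynomial ℂ) (z : ℂ) :
    ‖p.eval z‖ = ‖p.leadingCoeff‖ * (p.roots.map fun w => ‖z - w‖).prod := by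
  have hprod := map_multiset_prod (normHom : ℂ →*₀ ℝ) (p.roots.map fun w => z - w)
  rw [Multiset.map_map] at hprod
  rw [(IsAlgClosed.splits p).eval_eq_prod_roots, norm_mul]
  exact congrArg _ hprod

lemma exists_root_norm_sub_le {p : Polynomial ℂ} (hp : p ≠ 0) {s t : ℝ} (ht : 0 ≤ t)
    (hst : s * 2 ^ p.natDegree < t ^ p.natDegree) {z : ℂ} (hz : ‖p.eval z‖ ≤ s * coeffNorm p) :
    ∃ w ∈ p.roots, ‖z - w‖ ≤ t * max 1 ‖w‖ := by
  by_contra! hfar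
  have hs : 0 ≤ s :=
    nonneg_of_mul_nonneg_left ((norm_nonneg _).trans hz) (coeffNorm_pos hp)
  have hcard : p.roots.card = p.natDegree := (IsAlgClosed.splits p).natDegree_eq_card_roots.symm
  have hprod : t ^ p.natDegree * (p.roots.map fun w => max 1 ‖w‖).prod
      ≤ (p.roots.map fun w => ‖z - w‖).prod := by
    rw [← hcard, ← Multiset.prod_replicate, ← Multiset.map_const', ← Multiset.prod_map_mul]
    exact Multiset.prod_map_le_prod_map₀ _ _ (fun w _ => by positivity) fun w hw => (hfar w hw).le
  have hlower : t ^ p.natDegree * p.mahlerMeasure ≤ ‖p.eval z‖ := by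
    rw [norm_eval_eq_prod_roots, p.mahlerMeasure_eq_leadingCoeff_mul_prod_roots, mul_left_comm]
    gcongr
  have hupper : ‖p.eval z‖ ≤ s * 2 ^ p.natDegree * p.mahlerMeasure := by
    rw [mul_assoc]
    exact hz.trans (mul_le_mul_of_nonneg_left (coeffNorm_le_two_pow_mul_mahlerMeasure p) hs)
  exact (mul_lt_mul_of_pos_right hst (Polynomial.mahlerMeasure_pos_of_ne_zero hp)).not_ge
    (hlower.trans hupper)

lemma gaussianPDFReal_zero_one (x : ℝ) :
    gaussianPDFReal 0 1 x = (√(2 * Real.pi))⁻¹ * Real.exp (-(x ^ 2 / 2)) := by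
  simp [gaussianPDFReal, neg_div]

lemma gaussianPDFReal_zero_one_le_exp (x : ℝ) :
    gaussianPDFReal 0 1 x ≤ Real.exp (-(x ^ 2 / 2)) := by
  rw [gaussianPDFReal_zero_one]
  refine mul_le_of_le_one_left (Real.exp_nonneg _) (inv_le_one_of_one_le₀ ?_)
  rw [Real.one_le_sqrt]
  linarith [Real.pi_gt_three]

lemma max_one_abs_mul_gaussianPDFReal_le_one (x : ℝ) :
    max 1 |x| * gaussianPDFReal 0 1 x ≤ 1 := by
  have hmax : max 1 |x| ≤ Real.exp (x ^ 2 / 2) :=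
    (max_le (by linarith [sq_nonneg x]) (by nlinarith [sq_nonneg (|x| - 1), sq_abs x])).trans
      (Real.add_one_le_exp (x ^ 2 / 2))
  calc max 1 |x| * gaussianPDFReal 0 1 x
      ≤ Real.exp (x ^ 2 / 2) * Real.exp (-(x ^ 2 / 2)) := by
        gcongr
        exacts [gaussianPDFReal_nonneg 0 1 x, gaussianPDFReal_zero_one_le_exp x]
    _ = 1 := by rw [← Real.exp_add, add_neg_cancel, Real.exp_zero]

lemma gaussianReal_real_le_mul_volume {s : Set ℝ} (hs : MeasurableSet s) {c : ℝ} (hc : 0 ≤ c)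
    (hpdf : ∀ x ∈ s, gaussianPDFReal 0 1 x ≤ c) (hfin : volume s ≠ ⊤) :
    (gaussianReal 0 1).real s ≤ c * volume.real s := by
  have hle : gaussianReal 0 1 s ≤ ENNReal.ofReal c * volume s := by
    rw [gaussianReal_apply 0 one_ne_zero, ← setLIntegral_const]
    exact setLIntegral_mono' hs fun x hx => ENNReal.ofReal_le_ofReal (hpdf x hx)
  have htop : ENNReal.ofReal c * volume s ≠ ⊤ := ENNReal.mul_ne_top ENNReal.ofReal_ne_top hfin
  simpa [Measure.real, ENNReal.toReal_mul, hc] using ENNReal.toReal_mono htop hle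

lemma gaussianReal_norm_sub_le (z : ℂ) {t : ℝ} (ht : 0 ≤ t) :
    (gaussianReal 0 1).real {x : ℝ | ‖(x : ℂ) - z‖ ≤ t * max 1 ‖z‖} ≤ 4 * t := by
  rcases le_or_gt (1 / 2) t with ht' | ht'
  · exact measureReal_le_one.trans (by linarith)
  set r := max 1 ‖z‖
  have hr : 0 < r := zero_lt_one.trans_le (le_max_left _ _)
  set s := {x : ℝ | ‖(x : ℂ) - z‖ ≤ t * r}
  have hsub : s ⊆ Set.Icc (z.re - t * r) (z.re + t * r) := fun x hx => by
    have hre : |x - z.re| ≤ t * r := by simpa using (Complex.abs_re_le_norm (x - z)).trans hx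
    constructor <;> linarith [abs_le.mp hre]
  have hpdf : ∀ x ∈ s, gaussianPDFReal 0 1 x ≤ 2 / r := fun x hx => by
    have hnorm : ‖z‖ ≤ |x| + t * r := by
      calc ‖z‖ = ‖(x : ℂ) - (x - z)‖ := by rw [sub_sub_cancel]
        _ ≤ ‖(x : ℂ)‖ + ‖(x : ℂ) - z‖ := norm_sub_le _ _
        _ ≤ |x| + t * r := add_le_add (Complex.norm_real x).le hx
    have hrle : r ≤ max 1 |x| + t * r := by
      refine max_le ?_ (hnorm.trans (by gcongr; exact le_max_right _ _))
      exact (le_max_left 1 |x|).trans (le_add_of_nonneg_right (by positivity))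
    rw [le_div_iff₀ hr]
    nlinarith [max_one_abs_mul_gaussianPDFReal_le_one x, gaussianPDFReal_nonneg 0 1 x]
  calc (gaussianReal 0 1).real s
      ≤ 2 / r * volume.real s :=
        gaussianReal_real_le_mul_volume (measurableSet_le (by fun_prop) (by fun_prop))
          (by positivity) hpdf (measure_ne_top_of_subset hsub measure_Icc_lt_top.ne)
    _ ≤ 2 / r * volume.real (Set.Icc (z.re - t * r) (z.re + t * r)) := by
        gcongr
        exact measure_Icc_lt_top.ne
    _ = 4 * t := by
        rw [Real.volume_real_Icc_of_le (by nlinarith)]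
        field_simp
        ring

lemma mul_two_pow_lt_four_mul_rpow_inv_pow {s : ℝ} (hs : 0 < s) (hs' : s < 1) {n m : ℕ}
    (hnm : n ≤ m) : s * 2 ^ n < (4 * s ^ (m : ℝ)⁻¹) ^ n := by
  rcases Nat.eq_zero_or_pos n with rfl | hn
  · simpa using hs'
  have hm : (0 : ℝ) < m := by exact_mod_cast hn.trans_le hnm
  have hpow : s ≤ (s ^ (m : ℝ)⁻¹) ^ n := by
    rw [← Real.rpow_natCast, ← Real.rpow_mul hs.le]
    refine Real.self_le_rpow_of_le_one hs.le hs'.le ?_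
    rw [inv_mul_le_iff₀ hm, mul_one]
    exact_mod_cast hnm
  calc s * 2 ^ n < s * 4 ^ n := by gcongr; norm_num
    _ ≤ (4 * s ^ (m : ℝ)⁻¹) ^ n := by rw [mul_pow, mul_comm]; gcongr

lemma gaussianReal_norm_eval_complex_le {m : ℕ} (hm : 1 ≤ m) {p : Polynomial ℂ} (hp : p ≠ 0)
    (hdeg : p.natDegree ≤ m) {s : ℝ} (hs : 0 < s) :
    (gaussianReal 0 1).real {x : ℝ | ‖p.eval (x : ℂ)‖ ≤ s * coeffNorm p}
      ≤ 16 * m * s ^ (m : ℝ)⁻¹ := by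
  rcases le_or_gt 1 s with hs' | hs'
  · have hm' : (1 : ℝ) ≤ m := by exact_mod_cast hm
    exact measureReal_le_one.trans
      (by nlinarith [Real.one_le_rpow hs' (inv_nonneg.mpr (Nat.cast_nonneg (α := ℝ) m))])
  set t : ℝ := 4 * s ^ (m : ℝ)⁻¹ with ht
  have ht0 : 0 ≤ t := by positivity
  have hsub : {x : ℝ | ‖p.eval (x : ℂ)‖ ≤ s * coeffNorm p} ⊆
      ⋃ z ∈ p.roots.toFinset, {x : ℝ | ‖(x : ℂ) - z‖ ≤ t * max 1 ‖z‖} := fun x hx => by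
    obtain ⟨z, hz, hxz⟩ := exists_root_norm_sub_le hp ht0
      (mul_two_pow_lt_four_mul_rpow_inv_pow hs hs' hdeg) hx
    exact Set.mem_biUnion (Multiset.mem_toFinset.mpr hz) hxz
  have hcard : p.roots.toFinset.card ≤ m :=
    (p.roots.toFinset_card_le.trans p.card_roots').trans hdeg
  calc (gaussianReal 0 1).real {x : ℝ | ‖p.eval (x : ℂ)‖ ≤ s * coeffNorm p}
      ≤ ∑ z ∈ p.roots.toFinset,
          (gaussianReal 0 1).real {x : ℝ | ‖(x : ℂ) - z‖ ≤ t * max 1 ‖z‖} :=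
        (measureReal_mono hsub (measure_ne_top _ _)).trans (measureReal_biUnion_finset_le _ _)
    _ ≤ p.roots.toFinset.card • (4 * t) :=
        Finset.sum_le_card_nsmul _ _ _ fun z _ => gaussianReal_norm_sub_le z ht0
    _ ≤ m * (4 * t) := by rw [nsmul_eq_mul]; gcongr
    _ = 16 * m * s ^ (m : ℝ)⁻¹ := by rw [ht]; ring

lemma gaussianReal_abs_eval_le {m : ℕ} (hm : 1 ≤ m) {p : Polynomial ℝ} (hp : p ≠ 0)
    (hdeg : p.natDegree ≤ m) {s : ℝ} (hs : 0 < s) :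
    (gaussianReal 0 1).real {x | |p.eval x| ≤ s * coeffNorm p} ≤ 16 * m * s ^ (m : ℝ)⁻¹ := by
  have hnorm : ∀ x : ℝ, ‖(p.map (algebraMap ℝ ℂ)).eval (x : ℂ)‖ = |p.eval x| := fun x => by
    rw [← Complex.coe_algebraMap, Polynomial.eval_map_algebraMap,
      Polynomial.aeval_algebraMap_apply_eq_algebraMap_eval, norm_algebraMap', Real.norm_eq_abs]
  have hcomplex := gaussianReal_norm_eval_complex_le hm
    ((Polynomial.map_ne_zero_iff (algebraMap ℝ ℂ).injective).mpr hp)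
    (Polynomial.natDegree_map_le.trans hdeg) hs
  simpa only [hnorm, coeffNorm_map_algebraMap] using hcomplex

end SmallBall

/-! ### Truncated weights and their averages -/

section LayerCake

variable {Ω : Type*} [MeasurableSpace Ω] {μ : Measure Ω} {W : Ω → ℝ}

lemma integral_eq_intervalIntegral_measureReal_le (hW : Integrable W μ) (h0 : ∀ ω, 0 ≤ W ω)
    (h1 : ∀ ω, W ω ≤ 1) : ∫ ω, W ω ∂μ = ∫ u in (0 : ℝ)..1, μ.real {ω | u ≤ W ω} := by
  rw [hW.integral_eq_integral_Ioc_meas_le (M := 1) (Filter.Eventually.of_forall h0)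
    (Filter.Eventually.of_forall h1), intervalIntegral.integral_of_le zero_le_one]

lemma intervalIntegrable_measureReal_le [IsFiniteMeasure μ] (a b : ℝ) :
    IntervalIntegrable (fun u => μ.real {ω | u ≤ W ω}) volume a b :=
  Antitone.intervalIntegrable fun _ _ huv =>
    measureReal_mono (fun _ hω => huv.trans hω) (measure_ne_top _ _)

variable [IsProbabilityMeasure μ]

lemma integral_le_of_measureReal_le_div (hW : Integrable W μ) (h0 : ∀ ω, 0 ≤ W ω)
    (h1 : ∀ ω, W ω ≤ 1) {b B : ℝ} (hb : 0 < b) (hb1 : b ≤ 1)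
    (htail : ∀ u, b < u → u < 1 → μ.real {ω | u ≤ W ω} ≤ B / u) :
    ∫ ω, W ω ∂μ ≤ b + B * Real.log (1 / b) := by
  rw [integral_eq_intervalIntegral_measureReal_le hW h0 h1,
    ← intervalIntegral.integral_add_adjacent_intervals (intervalIntegrable_measureReal_le 0 b)
      (intervalIntegrable_measureReal_le b 1)]
  refine add_le_add ?_ ?_
  · calc ∫ u in (0 : ℝ)..b, μ.real {ω | u ≤ W ω} ≤ ∫ _ in (0 : ℝ)..b, (1 : ℝ) :=
          intervalIntegral.integral_mono_on hb.le (intervalIntegrable_measureReal_le 0 b) (by simp)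
            fun _ _ => measureReal_le_one
      _ = b := by simp
  · have hcont : ContinuousOn (fun u : ℝ => B / u) (Set.uIcc b 1) :=
      continuousOn_const.div continuousOn_id fun u hu =>
        (hb.trans_le (Set.uIcc_of_le hb1 ▸ hu).1).ne'
    calc ∫ u in b..1, μ.real {ω | u ≤ W ω} ≤ ∫ u in b..1, B / u :=
          intervalIntegral.integral_mono_on_of_le_Ioo hb1 (intervalIntegrable_measureReal_le b 1)
            hcont.intervalIntegrable fun u hu => htail u hu.1 hu.2
      _ = B * Real.log (1 / b) := by
          simp only [div_eq_mul_inv]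
          rw [intervalIntegral.integral_const_mul, integral_inv_of_pos hb one_pos, div_eq_mul_inv]

lemma integral_le_of_measureReal_le_rpow (hW : Integrable W μ) (h0 : ∀ ω, 0 ≤ W ω)
    (h1 : ∀ ω, W ω ≤ 1) {B : ℝ}
    (htail : ∀ u, 0 < u → u < 1 → μ.real {ω | u ≤ W ω} ≤ B * u ^ (-(1 / 2) : ℝ)) :
    ∫ ω, W ω ∂μ ≤ 2 * B := by
  rw [integral_eq_intervalIntegral_measureReal_le hW h0 h1]
  calc ∫ u in (0 : ℝ)..1, μ.real {ω | u ≤ W ω}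
      ≤ ∫ u in (0 : ℝ)..1, B * u ^ (-(1 / 2) : ℝ) :=
        intervalIntegral.integral_mono_on_of_le_Ioo zero_le_one
          (intervalIntegrable_measureReal_le 0 1)
          ((intervalIntegral.intervalIntegrable_rpow' (by norm_num)).const_mul B)
          fun u hu => htail u hu.1 hu.2
    _ = 2 * B := by
        rw [intervalIntegral.integral_const_mul, integral_rpow (Or.inl (by norm_num))]
        norm_num
        ring

end LayerCake

section Weight

/-- The weight `min (1, (ε / y) ^ α)`, cut off from below at its value for `y = a`. This is the
bound that a one-dimensional estimate at scale `ε` gives for a polynomial of size `y`; the cut-off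
leaves room for one logarithm when the weight is averaged, and the maximum in the denominator avoids
a division by zero at `y = 0`. -/
noncomputable def weight (α ε a y : ℝ) : ℝ :=
  (ε / max ε (min y a)) ^ α

variable {α ε a y : ℝ}

lemma weight_nonneg (hε : 0 < ε) : 0 ≤ weight α ε a y := by
  unfold weight
  positivity

lemma weight_le_one (hα : 0 ≤ α) (hε : 0 < ε) : weight α ε a y ≤ 1 :=
  Real.rpow_le_one (by positivity) (div_le_one_of_le₀ (le_max_left _ _) (by positivity)) hα

lemma weight_antitone (hα : 0 ≤ α) (hε : 0 < ε) : Antitone (weight α ε a) := fun x y hxy => by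
  unfold weight
  gcongr

lemma rpow_le_weight (hα : 0 ≤ α) (hε : 0 < ε) {b : ℝ} (hεb : ε ≤ b) (hb : min y a ≤ b) :
    (ε / b) ^ α ≤ weight α ε a y := by
  have hmax : max ε (min y a) ≤ b := max_le hεb hb
  have hb0 : 0 < b := hε.trans_le hεb
  unfold weight
  gcongr

lemma weight_of_le (hεa : ε ≤ a) (hay : a ≤ y) : weight α ε a y = (ε / a) ^ α := by
  rw [weight, min_eq_right hay, max_eq_right hεa]

lemma weight_eq_one (hε : 0 < ε) (hy : y ≤ ε) : weight α ε a y = 1 := by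
  rw [weight, max_eq_left ((min_le_left _ _).trans hy), div_self hε.ne', Real.one_rpow]

lemma measurable_weight : Measurable (weight α ε a) := by
  unfold weight
  fun_prop

lemma integrable_weight_comp {Ω : Type*} [MeasurableSpace Ω] {μ : Measure Ω} [IsFiniteMeasure μ]
    (hα : 0 ≤ α) (hε : 0 < ε) {g : Ω → ℝ} (hg : Measurable g) :
    Integrable (fun ω => weight α ε a (g ω)) μ :=
  Integrable.of_bound (measurable_weight.comp hg).aestronglyMeasurable 1
    (Filter.Eventually.of_forall fun _ =>
      (Real.norm_of_nonneg (weight_nonneg hε)).trans_le (weight_le_one hα hε))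

lemma weight_le_mul_weight_mul (hα : 0 ≤ α) (hα1 : α ≤ 1) (hε : 0 < ε) (ha : 0 ≤ a) {c : ℝ}
    (hc : 1 ≤ c) : weight α ε a y ≤ c * weight α ε a (c * y) := by
  have hc0 : 0 < c := one_pos.trans_le hc
  have hmax : max ε (min (c * y) a) ≤ c * max ε (min y a) := by
    rw [mul_max_of_nonneg _ _ hc0.le, mul_min_of_nonneg _ _ hc0.le]
    exact max_le_max (le_mul_of_one_le_left hε.le hc)
      (min_le_min le_rfl (le_mul_of_one_le_left ha hc))
  have hratio : ε / max ε (min y a) ≤ c * (ε / max ε (min (c * y) a)) := by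
    rw [mul_div_assoc', div_le_div_iff₀ (by positivity) (by positivity)]
    nlinarith
  calc weight α ε a y ≤ (c * (ε / max ε (min (c * y) a))) ^ α := by
        unfold weight
        gcongr
    _ = c ^ α * weight α ε a (c * y) := Real.mul_rpow hc0.le (by positivity)
    _ ≤ c * weight α ε a (c * y) := by
        gcongr
        exacts [weight_nonneg hε, Real.rpow_le_self_of_one_le hc hα1]

lemma le_div_rpow_inv_of_le_weight (hα : 0 < α) (hε : 0 < ε) (ha : 0 < a) {u : ℝ} (hu : 0 < u)
    (hua : (ε / a) ^ α < u) (huy : u ≤ weight α ε a y) : y ≤ ε / u ^ α⁻¹ := by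
  have hlevel : u ^ α⁻¹ ≤ ε / max ε (min y a) :=
    (Real.rpow_inv_le_iff_of_pos hu.le (by positivity) hα).mpr huy
  have hmax : max ε (min y a) ≤ ε / u ^ α⁻¹ :=
    (le_div_comm₀ (by positivity) (by positivity)).mp hlevel
  have hcut : ε / u ^ α⁻¹ < a := by
    rw [div_lt_comm₀ (by positivity) ha]
    exact (Real.lt_rpow_inv_iff_of_pos (by positivity) hu.le hα).mpr hua
  exact (min_le_iff.mp ((le_max_right _ _).trans hmax)).resolve_right hcut.not_ge

lemma gaussianReal_le_weight_abs_eval_le {m : ℕ} (hm : 1 ≤ m) {p : Polynomial ℝ} (hp : p ≠ 0)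
    (hdeg : p.natDegree ≤ m) (hε : 0 < ε) (ha : 0 < a) {u : ℝ} (hu : 0 < u)
    (hua : (ε / a) ^ (m : ℝ)⁻¹ < u) :
    (gaussianReal 0 1).real {x | u ≤ weight (m : ℝ)⁻¹ ε a |p.eval x|}
      ≤ 16 * m * (ε / coeffNorm p) ^ (m : ℝ)⁻¹ / u := by
  have hm0 : (0 : ℝ) < m := by exact_mod_cast hm
  have hN := coeffNorm_pos hp
  have hsub : {x | u ≤ weight (m : ℝ)⁻¹ ε a |p.eval x|} ⊆
      {x | |p.eval x| ≤ ε / coeffNorm p / u ^ (m : ℝ) * coeffNorm p} := fun x hx => by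
    have hle := le_div_rpow_inv_of_le_weight (inv_pos.mpr hm0) hε ha hu hua hx
    rw [inv_inv] at hle
    calc |p.eval x| ≤ ε / u ^ (m : ℝ) := hle
      _ = ε / coeffNorm p / u ^ (m : ℝ) * coeffNorm p := by field_simp
  calc _ ≤ _ := measureReal_mono hsub (measure_ne_top _ _)
    _ ≤ 16 * m * (ε / coeffNorm p / u ^ (m : ℝ)) ^ (m : ℝ)⁻¹ :=
        gaussianReal_abs_eval_le hm hp hdeg (by positivity)
    _ = 16 * m * (ε / coeffNorm p) ^ (m : ℝ)⁻¹ / u := by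
        rw [Real.div_rpow (by positivity) (by positivity), Real.rpow_rpow_inv hu.le hm0.ne',
          mul_div_assoc]

lemma integral_weight_abs_eval_le {m : ℕ} (hm : 1 ≤ m) {p : Polynomial ℝ} (hdeg : p.natDegree ≤ m)
    (hε : 0 < ε) (hεa : ε ≤ a) :
    ∫ x, weight (m : ℝ)⁻¹ ε a |p.eval x| ∂(gaussianReal 0 1) ≤
      16 * m * (1 + Real.log (a / ε)) * weight (m : ℝ)⁻¹ ε a (coeffNorm p) := by
  have hm1 : (1 : ℝ) ≤ m := by exact_mod_cast hm
  have hα : 0 ≤ (m : ℝ)⁻¹ := by positivity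
  have ha : 0 < a := hε.trans_le hεa
  have hlog : 0 ≤ Real.log (a / ε) := Real.log_nonneg ((one_le_div hε).mpr hεa)
  have hint : Integrable (fun x => weight (m : ℝ)⁻¹ ε a |p.eval x|) (gaussianReal 0 1) :=
    integrable_weight_comp hα hε (by fun_prop)
  rcases le_or_gt (coeffNorm p) ε with hN | hN
  · rw [weight_eq_one hε hN, mul_one]
    calc _ ≤ ∫ _, (1 : ℝ) ∂(gaussianReal 0 1) :=
          integral_mono hint (by simp) fun x => weight_le_one hα hε
      _ = 1 := by simp
      _ ≤ _ := by nlinarith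
  have hp : p ≠ 0 := by
    rintro rfl
    simp [coeffNorm, hε.not_gt] at hN
  set w := weight (m : ℝ)⁻¹ ε a (coeffNorm p)
  set b := (ε / a) ^ (m : ℝ)⁻¹ with hb
  have hb0 : 0 < b := by positivity
  have hb1 : b ≤ 1 := Real.rpow_le_one (by positivity) ((div_le_one ha).mpr hεa) hα
  have hbw : b ≤ w := rpow_le_weight hα hε hεa (min_le_right _ _)
  have hNw : (ε / coeffNorm p) ^ (m : ℝ)⁻¹ ≤ w := rpow_le_weight hα hε hN.le (min_le_left _ _)
  have hlogb : Real.log (1 / b) ≤ Real.log (a / ε) := by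
    rw [hb, one_div, ← Real.inv_rpow (by positivity), inv_div, Real.log_rpow (by positivity)]
    exact mul_le_of_le_one_left hlog (inv_le_one_of_one_le₀ hm1)
  calc ∫ x, weight (m : ℝ)⁻¹ ε a |p.eval x| ∂(gaussianReal 0 1)
      ≤ b + 16 * m * (ε / coeffNorm p) ^ (m : ℝ)⁻¹ * Real.log (1 / b) :=
        integral_le_of_measureReal_le_div hint (fun _ => weight_nonneg hε)
          (fun _ => weight_le_one hα hε) hb0 hb1 fun u hu _ =>
            gaussianReal_le_weight_abs_eval_le hm hp hdeg hε ha (hb0.trans hu) hu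
    _ ≤ w + 16 * m * w * Real.log (a / ε) := by
        have : 0 ≤ Real.log (1 / b) := Real.log_nonneg ((one_le_div hb0).mpr hb1)
        have : 0 ≤ w := hb0.le.trans hbw
        gcongr
    _ ≤ 16 * m * (1 + Real.log (a / ε)) * w := by nlinarith [hb0.trans_le hbw]

/-- The standard Gaussian measure of `[-1, 1]`. On this interval the values of a polynomial are at
most its coefficient norm, so averages over it turn pointwise bounds into bounds at the norm. -/
noncomputable def unitMass : ℝ := (gaussianReal 0 1).real (Set.Icc (-1) 1)

lemma unitMass_pos : 0 < unitMass := by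
  refine ENNReal.toReal_pos (fun h => ?_) (measure_ne_top _ _)
  have hvol := gaussianReal_absolutelyContinuous' 0 one_ne_zero h
  norm_num [Real.volume_Icc] at hvol

lemma unitMass_mul_weight_coeffNorm_le (hα : 0 ≤ α) (hε : 0 < ε) (p : Polynomial ℝ) :
    unitMass * weight α ε a (coeffNorm p) ≤ ∫ x, weight α ε a |p.eval x| ∂(gaussianReal 0 1) := by
  have hint : Integrable (fun x => weight α ε a |p.eval x|) (gaussianReal 0 1) :=
    integrable_weight_comp hα hε (by fun_prop)
  calc unitMass * weight α ε a (coeffNorm p)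
      = ∫ _ in Set.Icc (-1 : ℝ) 1, weight α ε a (coeffNorm p) ∂(gaussianReal 0 1) := by
        rw [setIntegral_const, smul_eq_mul, unitMass]
    _ ≤ ∫ x in Set.Icc (-1 : ℝ) 1, weight α ε a |p.eval x| ∂(gaussianReal 0 1) :=
        setIntegral_mono_on (by simp) hint.integrableOn measurableSet_Icc fun x hx =>
          weight_antitone hα hε (norm_eval_le_coeffNorm p (abs_le.mpr hx))
    _ ≤ _ := setIntegral_le_integral hint (Filter.Eventually.of_forall fun _ => weight_nonneg hε)

lemma weight_coeffNorm_le_integral_derivative (hα : 0 ≤ α) (hα1 : α ≤ 1) (hε : 0 < ε) (ha : 0 ≤ a)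
    {m : ℕ} (hm : 1 ≤ m) {p : Polynomial ℝ} (hdeg : p.natDegree ≤ m) :
    weight α ε a (coeffNorm p) ≤
      m * (unitMass⁻¹ * ∫ x, weight α ε a |p.derivative.eval x| ∂(gaussianReal 0 1)) := by
  have hnorm : coeffNorm p.derivative ≤ m * coeffNorm p :=
    (coeffNorm_derivative_le p).trans (by gcongr; exact coeffNorm_nonneg p)
  calc weight α ε a (coeffNorm p) ≤ m * weight α ε a (m * coeffNorm p) :=
        weight_le_mul_weight_mul hα hα1 hε ha (by exact_mod_cast hm)
    _ ≤ m * weight α ε a (coeffNorm p.derivative) := by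
        gcongr
        exact weight_antitone hα hε hnorm
    _ ≤ _ := by
        gcongr
        rw [le_inv_mul_iff₀ unitMass_pos]
        exact unitMass_mul_weight_coeffNorm_le hα hε p.derivative

end Weight

/-! ### Variation of a function with finitely many critical points -/

section Variation

variable {u u' : ℝ → ℝ} {M : ℝ}

lemma intervalIntegral_abs_deriv_le_of_ne_zero (hu : ∀ x, HasDerivAt u (u' x) x)
    (hu' : Continuous u') (hM : ∀ x y, u x - u y ≤ M) {a b : ℝ} (hab : a ≤ b)
    (hne : ∀ x ∈ Set.Ioo a b, u' x ≠ 0) : ∫ x in a..b, |u' x| ≤ M := by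
  have hFTC : ∫ x in a..b, u' x = u b - u a :=
    intervalIntegral.integral_eq_sub_of_hasDerivAt (fun x _ => hu x) (hu'.intervalIntegrable a b)
  rcases hasDerivWithinAt_forall_lt_or_forall_gt_of_forall_ne (convex_Ioo a b)
    (fun x _ => (hu x).hasDerivWithinAt) hne with hneg | hpos
  · calc ∫ x in a..b, |u' x| ≤ ∫ x in a..b, -u' x :=
          intervalIntegral.integral_mono_on_of_le_Ioo hab (hu'.abs.intervalIntegrable a b)
            (hu'.neg.intervalIntegrable a b) fun x hx => (abs_of_neg (hneg x hx)).le
      _ = u a - u b := by rw [intervalIntegral.integral_neg, hFTC, neg_sub]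
      _ ≤ M := hM a b
  · calc ∫ x in a..b, |u' x| ≤ ∫ x in a..b, u' x :=
          intervalIntegral.integral_mono_on_of_le_Ioo hab (hu'.abs.intervalIntegrable a b)
            (hu'.intervalIntegrable a b) fun x hx => (abs_of_pos (hpos x hx)).le
      _ ≤ M := hFTC.trans_le (hM b a)

lemma intervalIntegral_abs_deriv_le (hu : ∀ x, HasDerivAt u (u' x) x) (hu' : Continuous u')
    (hM : ∀ x y, u x - u y ≤ M) (S : Finset ℝ) {a b : ℝ} (hab : a ≤ b)
    (hS : ∀ x ∈ Set.Ioo a b, u' x = 0 → x ∈ S) : ∫ x in a..b, |u' x| ≤ M * (S.card + 1) := by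
  have hM0 : 0 ≤ M := (sub_self (u 0)).symm.le.trans (hM 0 0)
  induction S using Finset.induction_on_max generalizing b with
  | empty =>
    simpa using intervalIntegral_abs_deriv_le_of_ne_zero hu hu' hM hab fun x hx h0 => by
      simpa using hS x hx h0
  | insert c S hc ih =>
    have hcard : ((insert c S).card : ℝ) = S.card + 1 := by
      exact_mod_cast Finset.card_insert_of_notMem fun h => (hc c h).false
    have hright : ∀ x, c < x → x ∉ insert c S := fun x hx hmem =>
      (Finset.mem_insert.mp hmem).elim hx.ne' fun h => hx.not_gt (hc x h)
    rw [hcard]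
    rcases le_or_gt c a with hca | hac
    · have := intervalIntegral_abs_deriv_le_of_ne_zero hu hu' hM hab fun x hx h0 =>
        hright x (hca.trans_lt hx.1) (hS x hx h0)
      nlinarith [Nat.cast_nonneg (α := ℝ) S.card]
    rcases le_or_gt b c with hbc | hcb
    · have := ih hab fun x hx h0 =>
        Finset.mem_of_mem_insert_of_ne (hS x hx h0) (hx.2.trans_le hbc).ne
      linarith
    have hleft := ih hac.le fun x hx h0 =>
      Finset.mem_of_mem_insert_of_ne (hS x ⟨hx.1, hx.2.trans hcb⟩ h0) hx.2.ne
    have hrest := intervalIntegral_abs_deriv_le_of_ne_zero hu hu' hM hcb.le fun x hx h0 =>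
      hright x hx.1 (hS x ⟨hac.trans hx.1, hx.2⟩ h0)
    rw [← intervalIntegral.integral_add_adjacent_intervals (hu'.abs.intervalIntegrable a c)
      (hu'.abs.intervalIntegrable c b)]
    linarith

lemma integrable_deriv_and_integral_abs_deriv_le (hu : ∀ x, HasDerivAt u (u' x) x)
    (hu' : Continuous u') (hM : ∀ x y, u x - u y ≤ M) {S : Finset ℝ}
    (hS : ∀ x, u' x = 0 → x ∈ S) : Integrable u' ∧ ∫ x, |u' x| ≤ M * (S.card + 1) := by
  have hbound : ∀ n : ℕ, ∫ x in (-n : ℝ)..n, |u' x| ≤ M * (S.card + 1) := fun n =>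
    intervalIntegral_abs_deriv_le hu hu' hM S (neg_le_self n.cast_nonneg) fun x _ => hS x
  have hbot : Filter.Tendsto (fun n : ℕ => (-n : ℝ)) Filter.atTop Filter.atBot :=
    Filter.tendsto_neg_atTop_atBot.comp tendsto_natCast_atTop_atTop
  have hint : Integrable u' :=
    integrable_of_intervalIntegral_norm_bounded _ (fun n => (hu'.integrableOn_Ioc)) hbot
      tendsto_natCast_atTop_atTop (Filter.Eventually.of_forall hbound)
  exact ⟨hint, le_of_tendsto (intervalIntegral_tendsto_integral hint.abs hbot
    tendsto_natCast_atTop_atTop) (Filter.Eventually.of_forall hbound)⟩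

end Variation

/-! ### Gaussian integration by parts -/

section Stein

lemma hasDerivAt_gaussianPDFReal_zero_one (x : ℝ) :
    HasDerivAt (gaussianPDFReal 0 1) (-x * gaussianPDFReal 0 1 x) x := by
  rw [funext gaussianPDFReal_zero_one]
  exact ((((hasDerivAt_pow 2 x).div_const 2).neg.exp).const_mul (√(2 * Real.pi))⁻¹).congr_deriv
    (by simp only [Pi.neg_apply]; push_cast; ring)

lemma gaussianReal_zero_one_le_volume : gaussianReal 0 1 ≤ volume := by
  have hpdf : gaussianPDF 0 1 ≤ 1 := fun x => by
    refine ENNReal.ofReal_le_one.mpr ((gaussianPDFReal_zero_one_le_exp x).trans ?_)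
    exact Real.exp_le_one_iff.mpr (neg_nonpos.mpr (by positivity))
  calc gaussianReal 0 1 = volume.withDensity (gaussianPDF 0 1) :=
        gaussianReal_of_var_ne_zero 0 one_ne_zero
    _ ≤ volume.withDensity 1 := withDensity_mono (Filter.Eventually.of_forall hpdf)
    _ = volume := withDensity_one

lemma integrable_gaussianReal_iff {f : ℝ → ℝ} :
    Integrable f (gaussianReal 0 1) ↔ Integrable fun x => gaussianPDFReal 0 1 x * f x := by
  rw [gaussianReal_of_var_ne_zero 0 one_ne_zero,
    integrable_withDensity_iff_integrable_smul' (measurable_gaussianPDF 0 1)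
      (Filter.Eventually.of_forall fun _ => ENNReal.ofReal_lt_top)]
  simp only [toReal_gaussianPDF, smul_eq_mul]

lemma abs_integral_le_integral {Ω : Type*} [MeasurableSpace Ω] {μ : Measure Ω} {f g : Ω → ℝ}
    (hg : Integrable g μ) (hfg : ∀ ω, |f ω| ≤ g ω) : |∫ ω, f ω ∂μ| ≤ ∫ ω, g ω ∂μ :=
  norm_integral_le_of_norm_le (f := f) hg (Filter.Eventually.of_forall hfg)

lemma integrable_abs_gaussianReal : Integrable (fun x : ℝ => |x|) (gaussianReal 0 1) :=
  ((memLp_id_gaussianReal 1).integrable le_rfl).abs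

lemma integral_abs_gaussianReal_le_one : ∫ x, |x| ∂(gaussianReal 0 1) ≤ 1 := by
  have hsq : ∫ x, x ^ 2 ∂(gaussianReal 0 1) = 1 := by
    have hvar := variance_of_integral_eq_zero (X := id) (μ := gaussianReal 0 1) aemeasurable_id
      integral_id_gaussianReal
    rw [variance_id_gaussianReal] at hvar
    exact hvar.symm
  have hint : Integrable (fun x : ℝ => x ^ 2) (gaussianReal 0 1) :=
    (memLp_id_gaussianReal 2).integrable_sq
  calc ∫ x, |x| ∂(gaussianReal 0 1) ≤ ∫ x, (1 + x ^ 2) / 2 ∂(gaussianReal 0 1) :=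
        integral_mono integrable_abs_gaussianReal (((integrable_const 1).add hint).div_const 2)
          fun x => by nlinarith [sq_nonneg (|x| - 1), sq_abs x]
    _ = 1 := by
        rw [integral_div, integral_add (integrable_const 1) hint, hsq]
        simp

lemma abs_integral_id_mul_gaussianReal_le {f : ℝ → ℝ} {K : ℝ} (hK : ∀ x, |f x| ≤ K) :
    |∫ x, x * f x ∂(gaussianReal 0 1)| ≤ K := by
  calc |∫ x, x * f x ∂(gaussianReal 0 1)| ≤ ∫ x, |x| * K ∂(gaussianReal 0 1) :=
        abs_integral_le_integral (integrable_abs_gaussianReal.mul_const K) fun x =>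
          (abs_mul _ _).trans_le (mul_le_mul_of_nonneg_left (hK x) (abs_nonneg x))
    _ ≤ K := by
        rw [integral_mul_const]
        exact mul_le_of_le_one_left ((abs_nonneg _).trans (hK 0)) integral_abs_gaussianReal_le_one

lemma integral_deriv_gaussianReal {v v' : ℝ → ℝ} (hv : ∀ x, HasDerivAt v (v' x) x) {K : ℝ}
    (hK : ∀ x, |v x| ≤ K) (hint : Integrable v' (gaussianReal 0 1)) :
    ∫ x, v' x ∂(gaussianReal 0 1) = ∫ x, x * v x ∂(gaussianReal 0 1) := by
  have hvmeas : AEStronglyMeasurable v (gaussianReal 0 1) :=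
    (continuous_iff_continuousAt.mpr fun x => (hv x).continuousAt).aestronglyMeasurable
  have hvint : Integrable v (gaussianReal 0 1) :=
    Integrable.of_bound hvmeas K (Filter.Eventually.of_forall hK)
  have hxvint : Integrable (fun x => x * v x) (gaussianReal 0 1) :=
    ((memLp_id_gaussianReal 1).integrable le_rfl).mul_bdd hvmeas (Filter.Eventually.of_forall hK)
  have hzero : ∫ x, gaussianPDFReal 0 1 x • (v' x - x * v x) = 0 := by
    refine integral_eq_zero_of_hasDerivAt_of_integrable (f := fun x => gaussianPDFReal 0 1 x * v x)
      (fun x => ?_) (integrable_gaussianReal_iff.mp (hint.sub hxvint))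
      (integrable_gaussianReal_iff.mp hvint)
    exact ((hasDerivAt_gaussianPDFReal_zero_one x).mul (hv x)).congr_deriv (by ring)
  rw [← integral_gaussianReal_eq_integral_smul one_ne_zero, integral_sub hint hxvint] at hzero
  exact sub_eq_zero.mp hzero

lemma abs_integral_deriv_mul_gaussianReal_le {u u' χ χ' : ℝ → ℝ}
    (hu : ∀ x, HasDerivAt u (u' x) x) (hχ : ∀ x, HasDerivAt χ (χ' x) x) {ε B : ℝ}
    (hε : ∀ x, |u x| ≤ ε) (hB : ∀ x, |χ x| ≤ B) (hχint : Integrable χ')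
    (hint : Integrable (fun x => u' x * χ x) (gaussianReal 0 1)) :
    |∫ x, u' x * χ x ∂(gaussianReal 0 1)| ≤ ε * ((∫ x, |χ' x|) + B) := by
  have hε0 : 0 ≤ ε := (abs_nonneg _).trans (hε 0)
  have huχ : ∀ x, |u x * χ x| ≤ ε * B := fun x =>
    (abs_mul _ _).trans_le (mul_le_mul (hε x) (hB x) (abs_nonneg _) hε0)
  have humeas : AEStronglyMeasurable u (gaussianReal 0 1) :=
    (continuous_iff_continuousAt.mpr fun x => (hu x).continuousAt).aestronglyMeasurable
  have hχint' : Integrable χ' (gaussianReal 0 1) :=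
    hχint.mono_measure gaussianReal_zero_one_le_volume
  have huχint : Integrable (fun x => u x * χ' x) (gaussianReal 0 1) :=
    hχint'.bdd_mul humeas (Filter.Eventually.of_forall hε)
  have hstein : ∫ x, u' x * χ x ∂(gaussianReal 0 1) + ∫ x, u x * χ' x ∂(gaussianReal 0 1)
      = ∫ x, x * (u x * χ x) ∂(gaussianReal 0 1) := by
    rw [← integral_add hint huχint]
    exact integral_deriv_gaussianReal (fun x => (hu x).mul (hχ x)) huχ (hint.add huχint)
  have hvar : |∫ x, u x * χ' x ∂(gaussianReal 0 1)| ≤ ε * ∫ x, |χ' x| := by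
    calc |∫ x, u x * χ' x ∂(gaussianReal 0 1)| ≤ ∫ x, ε * |χ' x| ∂(gaussianReal 0 1) :=
          abs_integral_le_integral (hχint'.abs.const_mul ε) fun x =>
            (abs_mul _ _).trans_le (mul_le_mul_of_nonneg_right (hε x) (abs_nonneg _))
      _ = ε * ∫ x, |χ' x| ∂(gaussianReal 0 1) := integral_const_mul _ _
      _ ≤ ε * ∫ x, |χ' x| := by
          gcongr
          · exact Filter.Eventually.of_forall fun _ => abs_nonneg _
          · exact hχint.abs
          · exact gaussianReal_zero_one_le_volume
  have hmoment : |∫ x, x * (u x * χ x) ∂(gaussianReal 0 1)| ≤ ε * B :=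
    abs_integral_id_mul_gaussianReal_le huχ
  calc |∫ x, u' x * χ x ∂(gaussianReal 0 1)|
      = |∫ x, x * (u x * χ x) ∂(gaussianReal 0 1) - ∫ x, u x * χ' x ∂(gaussianReal 0 1)| := by
        rw [← eq_sub_of_add_eq hstein]
    _ ≤ ε * B + ε * ∫ x, |χ' x| := (abs_sub _ _).trans (add_le_add hmoment hvar)
    _ = ε * ((∫ x, |χ' x|) + B) := by ring

end Stein

/-! ### The one-dimensional estimate -/

/-- A test function of size `ε`: a `C¹` function `φ`, with derivative `φ'`, that is bounded by `ε`
and `1`-Lipschitz. Bounding `∫ φ' ∂μ` over these functions measures the smoothness of `μ` at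
scale `ε`. -/
structure IsTestFunction (ε : ℝ) (φ φ' : ℝ → ℝ) : Prop where
  hasDerivAt : ∀ s, HasDerivAt φ (φ' s) s
  continuous_deriv : Continuous φ'
  abs_le : ∀ s, |φ s| ≤ ε
  abs_deriv_le_one : ∀ s, |φ' s| ≤ 1

lemma IsTestFunction.abs_integral_deriv_comp_le_one {ε : ℝ} {φ φ' : ℝ → ℝ}
    (hφ : IsTestFunction ε φ φ') {Ω : Type*} [MeasurableSpace Ω] {μ : Measure Ω}
    [IsProbabilityMeasure μ] (g : Ω → ℝ) : |∫ ω, φ' (g ω) ∂μ| ≤ 1 :=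
  (abs_integral_le_integral (integrable_const 1) fun _ => hφ.abs_deriv_le_one _).trans_eq
    (by simp)

lemma IsTestFunction.integrable_deriv_comp {ε : ℝ} {φ φ' : ℝ → ℝ} (hφ : IsTestFunction ε φ φ')
    {Ω : Type*} [MeasurableSpace Ω] {μ : Measure Ω} [IsFiniteMeasure μ] {g : Ω → ℝ}
    (hg : Measurable g) : Integrable (fun ω => φ' (g ω)) μ :=
  Integrable.of_bound (hφ.continuous_deriv.measurable.comp hg).aestronglyMeasurable 1
    (Filter.Eventually.of_forall fun _ => hφ.abs_deriv_le_one _)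

section RegularizedInverse

variable {q : Polynomial ℝ} {δ : ℝ}

lemma hasDerivAt_eval_div_sq_add_sq (q : Polynomial ℝ) (hδ : 0 < δ) (x : ℝ) :
    HasDerivAt (fun x => q.eval x / (q.eval x ^ 2 + δ ^ 2))
      (q.derivative.eval x * (δ ^ 2 - q.eval x ^ 2) / (q.eval x ^ 2 + δ ^ 2) ^ 2) x :=
  ((q.hasDerivAt x).fun_div (((q.hasDerivAt x).fun_pow 2).add_const (δ ^ 2))
    (by positivity)).congr_deriv (by push_cast; ring)

lemma abs_div_sq_add_sq_le (hδ : 0 < δ) (y : ℝ) : |y / (y ^ 2 + δ ^ 2)| ≤ 1 / (2 * δ) := by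
  rw [abs_div, abs_of_pos (by positivity : 0 < y ^ 2 + δ ^ 2),
    div_le_div_iff₀ (by positivity) (by positivity)]
  nlinarith [sq_nonneg (|y| - δ), sq_abs y]

/-- The critical points of `q / (q² + δ²)` are the roots of `q' (δ² - q²)`, a polynomial of degree
less than `3k`. -/
lemma exists_finset_critical_eval_div_sq_add_sq {k : ℕ} (hq : q.natDegree ≤ k)
    (hne : q.derivative * (Polynomial.C (δ ^ 2) - q ^ 2) ≠ 0) :
    ∃ S : Finset ℝ, S.card ≤ 3 * k ∧ ∀ x, q.derivative.eval x * (δ ^ 2 - q.eval x ^ 2) = 0 →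
      x ∈ S := by
  refine ⟨(q.derivative * (Polynomial.C (δ ^ 2) - q ^ 2)).roots.toFinset, ?_, fun x hx => ?_⟩
  · have hderiv : q.derivative.natDegree ≤ k :=
      (Polynomial.natDegree_derivative_le q).trans ((Nat.sub_le _ _).trans hq)
    have hlevel : (Polynomial.C (δ ^ 2) - q ^ 2).natDegree ≤ 2 * k :=
      (Polynomial.natDegree_sub_le_iff_right (by simp)).mpr
        (Polynomial.natDegree_pow_le.trans (by gcongr))
    calc _ ≤ _ := Multiset.toFinset_card_le _
      _ ≤ _ := Polynomial.card_roots' _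
      _ ≤ k + 2 * k := Polynomial.natDegree_mul_le_of_le hderiv hlevel
      _ = 3 * k := by ring
  · rw [Multiset.mem_toFinset, Polynomial.mem_roots hne, Polynomial.IsRoot.def]
    simpa only [Polynomial.eval_mul, Polynomial.eval_sub, Polynomial.eval_C, Polynomial.eval_pow]
      using hx

lemma integrable_deriv_eval_div_sq_add_sq_and_integral_abs_le {k : ℕ} (hq : q.natDegree ≤ k)
    (hδ : 0 < δ) :
    Integrable (fun x =>
        q.derivative.eval x * (δ ^ 2 - q.eval x ^ 2) / (q.eval x ^ 2 + δ ^ 2) ^ 2) ∧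
      ∫ x, |q.derivative.eval x * (δ ^ 2 - q.eval x ^ 2) / (q.eval x ^ 2 + δ ^ 2) ^ 2| ≤
        (3 * k + 1) / δ := by
  by_cases hne : q.derivative * (Polynomial.C (δ ^ 2) - q ^ 2) = 0
  · have hzero : ∀ x, q.derivative.eval x * (δ ^ 2 - q.eval x ^ 2) = 0 := fun x => by
      simpa only [Polynomial.eval_mul, Polynomial.eval_sub, Polynomial.eval_C, Polynomial.eval_pow,
        Polynomial.eval_zero] using congrArg (Polynomial.eval x) hne
    simp only [hzero, zero_div, abs_zero, integral_zero]
    exact ⟨integrable_zero _ _ _, by positivity⟩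
  obtain ⟨S, hScard, hS⟩ := exists_finset_critical_eval_div_sq_add_sq hq hne
  have hcont : Continuous fun x =>
      q.derivative.eval x * (δ ^ 2 - q.eval x ^ 2) / (q.eval x ^ 2 + δ ^ 2) ^ 2 :=
    Continuous.div (by fun_prop) (by fun_prop) fun x => by positivity
  have hosc : ∀ x y, q.eval x / (q.eval x ^ 2 + δ ^ 2) - q.eval y / (q.eval y ^ 2 + δ ^ 2) ≤
      1 / δ := fun x y => by
    calc _ ≤ 1 / (2 * δ) + 1 / (2 * δ) := (le_abs_self _).trans ((abs_sub _ _).trans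
          (add_le_add (abs_div_sq_add_sq_le hδ _) (abs_div_sq_add_sq_le hδ _)))
      _ = 1 / δ := by field_simp; norm_num
  obtain ⟨hint, hle⟩ := integrable_deriv_and_integral_abs_deriv_le
    (hasDerivAt_eval_div_sq_add_sq q hδ) hcont hosc (S := S) fun x hx =>
      hS x ((div_eq_zero_iff.mp hx).resolve_right (by positivity))
  refine ⟨hint, hle.trans ?_⟩
  rw [one_div_mul_eq_div]
  gcongr
  exact_mod_cast hScard

lemma integrable_sq_div_sq_add_sq (q : Polynomial ℝ) (hδ : 0 < δ) :
    Integrable (fun x => δ ^ 2 / (q.eval x ^ 2 + δ ^ 2)) (gaussianReal 0 1) := by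
  have hcont : Continuous fun x => δ ^ 2 / (q.eval x ^ 2 + δ ^ 2) :=
    Continuous.div (by fun_prop) (by fun_prop) fun x => by positivity
  refine Integrable.of_bound hcont.aestronglyMeasurable 1 (Filter.Eventually.of_forall fun x => ?_)
  rw [Real.norm_of_nonneg (by positivity)]
  exact div_le_one_of_le₀ (by nlinarith [sq_nonneg (q.eval x)]) (by positivity)

lemma integral_sq_div_sq_add_sq_le {k : ℕ} (hk : 1 ≤ k) (hq : q.natDegree ≤ k) (hq0 : q ≠ 0)
    (hδ : 0 < δ) :
    ∫ x, δ ^ 2 / (q.eval x ^ 2 + δ ^ 2) ∂(gaussianReal 0 1) ≤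
      32 * k * (δ / coeffNorm q) ^ (k : ℝ)⁻¹ := by
  have hk1 : (1 : ℝ) ≤ k := by exact_mod_cast hk
  have hN := coeffNorm_pos hq0
  have htail : ∀ u : ℝ, 0 < u → u < 1 →
      (gaussianReal 0 1).real {x | u ≤ δ ^ 2 / (q.eval x ^ 2 + δ ^ 2)} ≤
        16 * k * (δ / coeffNorm q) ^ (k : ℝ)⁻¹ * u ^ (-(1 / 2) : ℝ) := by
    intro u hu hu1
    set t := u ^ (-(1 / 2) : ℝ) with ht
    have ht1 : 1 ≤ t := Real.one_le_rpow_of_pos_of_le_one_of_nonpos hu hu1.le (by norm_num)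
    have htsq : t ^ 2 = u⁻¹ := by
      rw [ht, ← Real.rpow_mul_natCast hu.le, ← Real.rpow_neg_one]
      norm_num
    have hsub : {x | u ≤ δ ^ 2 / (q.eval x ^ 2 + δ ^ 2)} ⊆
        {x | |q.eval x| ≤ (δ / coeffNorm q * t) * coeffNorm q} := fun x hx => by
      rw [Set.mem_ofPred_eq, le_div_comm₀ hu (by positivity)] at hx
      rw [Set.mem_ofPred_eq, mul_right_comm, div_mul_cancel₀ _ hN.ne']
      refine abs_le_of_sq_le_sq ?_ (by positivity)
      rw [mul_pow, htsq, ← div_eq_mul_inv]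
      linarith [sq_nonneg δ]
    calc _ ≤ _ := measureReal_mono hsub (measure_ne_top _ _)
      _ ≤ 16 * k * (δ / coeffNorm q * t) ^ (k : ℝ)⁻¹ :=
          gaussianReal_abs_eval_le hk hq0 hq (by positivity)
      _ = 16 * k * (δ / coeffNorm q) ^ (k : ℝ)⁻¹ * t ^ (k : ℝ)⁻¹ := by
          rw [Real.mul_rpow (by positivity) (by positivity), mul_assoc (16 * (k : ℝ))]
      _ ≤ 16 * k * (δ / coeffNorm q) ^ (k : ℝ)⁻¹ * t := by
          gcongr
          exact Real.rpow_le_self_of_one_le ht1 (inv_le_one_of_one_le₀ hk1)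
  calc _ ≤ 2 * (16 * k * (δ / coeffNorm q) ^ (k : ℝ)⁻¹) :=
        integral_le_of_measureReal_le_rpow (integrable_sq_div_sq_add_sq q hδ)
          (fun x => by positivity)
          (fun x => div_le_one_of_le₀ (by nlinarith [sq_nonneg (q.eval x)]) (by positivity)) htail
    _ = _ := by ring

end RegularizedInverse

section Univariate

variable {ε : ℝ} {φ φ' : ℝ → ℝ} {p : Polynomial ℝ} {m : ℕ}

/-- Split `1 = q² / (q² + δ²) + δ² / (q² + δ²)` with `q = p'`: the first part contains the
derivative of `φ ∘ p`, which can be integrated by parts. -/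
lemma IsTestFunction.abs_integral_eval_le_add (hφ : IsTestFunction ε φ φ') {k : ℕ}
    (hdeg : p.derivative.natDegree ≤ k) {δ : ℝ} (hδ : 0 < δ) :
    |∫ x, φ' (p.eval x) ∂(gaussianReal 0 1)| ≤
      ε * ((3 * k + 1) / δ + 1 / (2 * δ)) +
        ∫ x, δ ^ 2 / (p.derivative.eval x ^ 2 + δ ^ 2) ∂(gaussianReal 0 1) := by
  set q := p.derivative
  have hε0 : 0 ≤ ε := (abs_nonneg _).trans (hφ.abs_le 0)
  have hsplit : ∀ x, φ' (p.eval x) - φ' (p.eval x) * q.eval x *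
      (q.eval x / (q.eval x ^ 2 + δ ^ 2)) = φ' (p.eval x) * (δ ^ 2 / (q.eval x ^ 2 + δ ^ 2)) :=
    fun x => by
      have : q.eval x ^ 2 + δ ^ 2 ≠ 0 := by positivity
      field_simp
      ring
  have hremInt := integrable_sq_div_sq_add_sq q hδ
  have hrem : ∀ x, |φ' (p.eval x) * (δ ^ 2 / (q.eval x ^ 2 + δ ^ 2))| ≤
      δ ^ 2 / (q.eval x ^ 2 + δ ^ 2) := fun x => by
    rw [abs_mul, abs_of_nonneg (a := δ ^ 2 / _) (by positivity)]
    exact mul_le_of_le_one_left (by positivity) (hφ.abs_deriv_le_one _)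
  have hφint : Integrable (fun x => φ' (p.eval x)) (gaussianReal 0 1) :=
    hφ.integrable_deriv_comp p.continuous.measurable
  have hremInt' : Integrable (fun x => φ' (p.eval x) * (δ ^ 2 / (q.eval x ^ 2 + δ ^ 2)))
      (gaussianReal 0 1) :=
    hremInt.bdd_mul (c := 1) hφint.aestronglyMeasurable
      (Filter.Eventually.of_forall fun _ => hφ.abs_deriv_le_one _)
  have hmainInt : Integrable (fun x => φ' (p.eval x) * q.eval x *
      (q.eval x / (q.eval x ^ 2 + δ ^ 2))) (gaussianReal 0 1) :=
    (hφint.sub hremInt').congr (Filter.Eventually.of_forall fun x => by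
      simp only [Pi.sub_apply, ← hsplit x, sub_sub_cancel])
  obtain ⟨hχint, hvar⟩ := integrable_deriv_eval_div_sq_add_sq_and_integral_abs_le hdeg hδ
  have hibp := abs_integral_deriv_mul_gaussianReal_le
    (fun x => (hφ.hasDerivAt (p.eval x)).comp x (p.hasDerivAt x))
    (hasDerivAt_eval_div_sq_add_sq q hδ) (fun x => hφ.abs_le _)
    (fun x => abs_div_sq_add_sq_le hδ _) hχint hmainInt
  have hremle := abs_integral_le_integral hremInt hrem
  simp only [← hsplit] at hremle
  rw [integral_sub hφint hmainInt] at hremle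
  have hvar' := mul_le_mul_of_nonneg_left (add_le_add_left hvar (1 / (2 * δ))) hε0
  linarith [abs_sub_abs_le_abs_sub (∫ x, φ' (p.eval x) ∂(gaussianReal 0 1)) (∫ x, φ' (p.eval x) *
    q.eval x * (q.eval x / (q.eval x ^ 2 + δ ^ 2)) ∂(gaussianReal 0 1))]

lemma IsTestFunction.abs_integral_eval_le_div_of_derivative_eq_C (hφ : IsTestFunction ε φ φ')
    {c : ℝ} (hc : c ≠ 0) (hp : p.derivative = Polynomial.C c) :
    |∫ x, φ' (p.eval x) ∂(gaussianReal 0 1)| ≤ ε / |c| := by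
  have hcancel : ∀ x, φ' (p.eval x) * p.derivative.eval x * c⁻¹ = φ' (p.eval x) := fun x => by
    rw [hp, Polynomial.eval_C, mul_inv_cancel_right₀ hc]
  have hibp := abs_integral_deriv_mul_gaussianReal_le (χ := fun _ => c⁻¹)
    (fun x => (hφ.hasDerivAt (p.eval x)).comp x (p.hasDerivAt x)) (fun x => hasDerivAt_const x c⁻¹)
    (fun x => hφ.abs_le _) (fun _ => (abs_inv c).le) (integrable_zero _ _ _)
    (by simpa only [hcancel] using hφ.integrable_deriv_comp p.continuous.measurable)
  simpa only [hcancel, abs_zero, integral_zero, zero_add, ← div_eq_mul_inv] using hibp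

lemma IsTestFunction.abs_integral_eval_le (hφ : IsTestFunction ε φ φ') (hε : 0 < ε) (hm : 1 ≤ m)
    (hdeg : p.natDegree ≤ m) (hp : p.derivative ≠ 0) :
    |∫ x, φ' (p.eval x) ∂(gaussianReal 0 1)| ≤
      35 * m * (ε / coeffNorm p.derivative) ^ (m : ℝ)⁻¹ := by
  have hN := coeffNorm_pos hp
  have hqdeg : p.derivative.natDegree ≤ m - 1 :=
    (Polynomial.natDegree_derivative_le p).trans (Nat.sub_le_sub_right hdeg 1)
  obtain ⟨k, rfl⟩ := Nat.exists_eq_add_of_le' hm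
  rw [Nat.add_sub_cancel] at hqdeg
  rcases Nat.eq_zero_or_pos k with rfl | hk
  · obtain ⟨c, hc⟩ := Polynomial.natDegree_eq_zero.mp (Nat.le_zero.mp hqdeg)
    have hc0 : c ≠ 0 := fun h => hp (by rw [← hc, h, Polynomial.C_0])
    have hNc : coeffNorm p.derivative = |c| := by simp [← hc, coeffNorm]
    have hle := hφ.abs_integral_eval_le_div_of_derivative_eq_C hc0 hc.symm
    have hnonneg : 0 ≤ ε / |c| := by positivity
    norm_num [hNc]
    linarith
  -- `δ` balances the two error terms `ε / δ` and `(δ / coeffNorm p') ^ (1 / k)`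
  set r := (ε / coeffNorm p.derivative) ^ ((k + 1 : ℕ) : ℝ)⁻¹ with hr
  have hr0 : 0 < r := by positivity
  set δ := coeffNorm p.derivative * r ^ k with hδdef
  have hδ : 0 < δ := by positivity
  have hεδ : ε / δ = r := by
    rw [div_eq_iff hδ.ne', hδdef, mul_left_comm, ← pow_succ', hr,
      Real.rpow_inv_natCast_pow (by positivity) k.succ_ne_zero, mul_div_cancel₀ _ hN.ne']
  have hδN : (δ / coeffNorm p.derivative) ^ (k : ℝ)⁻¹ = r := by
    rw [hδdef, mul_div_cancel_left₀ _ hN.ne', Real.pow_rpow_inv_natCast hr0.le hk.ne']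
  have hsmall := integral_sq_div_sq_add_sq_le hk hqdeg hp hδ
  rw [hδN] at hsmall
  calc _ ≤ ε * ((3 * k + 1) / δ + 1 / (2 * δ)) +
        ∫ x, δ ^ 2 / (p.derivative.eval x ^ 2 + δ ^ 2) ∂(gaussianReal 0 1) :=
        hφ.abs_integral_eval_le_add hqdeg hδ
    _ ≤ (3 * k + 3 / 2) * (ε / δ) + 32 * k * r := by
        refine add_le_add (le_of_eq ?_) hsmall
        field_simp
        ring
    _ ≤ 35 * (k + 1 : ℕ) * r := by
        rw [hεδ]
        push_cast
        linarith

lemma IsTestFunction.abs_integral_eval_le_weight (hφ : IsTestFunction ε φ φ') (hε : 0 < ε)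
    (hm : 1 ≤ m) (hdeg : p.natDegree ≤ m) (a : ℝ) :
    |∫ x, φ' (p.eval x) ∂(gaussianReal 0 1)| ≤
      35 * m * weight (m : ℝ)⁻¹ ε a (coeffNorm p.derivative) := by
  have hm1 : (1 : ℝ) ≤ m := by exact_mod_cast hm
  rcases le_or_gt (coeffNorm p.derivative) ε with hN | hN
  · rw [weight_eq_one hε hN]
    linarith [hφ.abs_integral_deriv_comp_le_one (μ := gaussianReal 0 1) fun x => p.eval x]
  · have hp : p.derivative ≠ 0 := fun h => by
      rw [h, coeffNorm, Polynomial.sum_zero_index] at hN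
      exact hN.not_gt hε
    refine (hφ.abs_integral_eval_le hε hm hdeg hp).trans ?_
    gcongr
    exact rpow_le_weight (by positivity) hε hN.le (min_le_left _ _)

end Univariate

/-! ### Resampling one component of a Gaussian vector -/

section Resampling

variable {ι : Type*} [Fintype ι]

/-- The standard Gaussian measure on `ι → ℝ`; for `ι = Fin n` it is `stdGaussian n`. -/
noncomputable abbrev gaussianPi (ι : Type*) [Fintype ι] : Measure (ι → ℝ) :=
  Measure.pi fun _ => gaussianReal 0 1

/-- The map `(x, z) ↦ x - ⟨v, x⟩ v + z v`, which for a unit vector `v` replaces the component of `x`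
along `v` by `z`. -/
noncomputable def resample (v : ι → ℝ) : (ι → ℝ) × ℝ →L[ℝ] (ι → ℝ) :=
  ContinuousLinearMap.fst ℝ (ι → ℝ) ℝ +
    (ContinuousLinearMap.snd ℝ (ι → ℝ) ℝ - ∑ i, v i •
      (ContinuousLinearMap.proj i).comp (ContinuousLinearMap.fst ℝ (ι → ℝ) ℝ)).smulRight v

lemma resample_apply (v x : ι → ℝ) (z : ℝ) : resample v (x, z) = x - (v ⬝ᵥ x) • v + z • v := by
  ext j
  simp only [resample, dotProduct, add_apply, sub_apply, sum_apply, smul_apply,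
    ContinuousLinearMap.smulRight_apply, ContinuousLinearMap.comp_apply,
    ContinuousLinearMap.coe_fst', ContinuousLinearMap.coe_snd', ContinuousLinearMap.proj_apply,
    Pi.add_apply, Pi.sub_apply, Pi.smul_apply, smul_eq_mul]
  ring

lemma charFunDual_gaussianReal_zero_one (L : StrongDual ℝ ℝ) :
    charFunDual (gaussianReal 0 1) L = Complex.exp (-((L 1 ^ 2 / 2 : ℝ) : ℂ)) := by
  have hL : L = L 1 • ContinuousLinearMap.id ℝ ℝ := by ext; simp
  have hchar : charFunDual (gaussianReal 0 1) L = charFun (gaussianReal 0 1) (L 1) := by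
    rw [hL, ← charFun_map_eq_charFunDual_smul]
    simp
  rw [hchar, charFun_gaussianReal]
  push_cast
  ring_nf

lemma charFunDual_gaussianPi [DecidableEq ι] (L : StrongDual ℝ (ι → ℝ)) :
    charFunDual (gaussianPi ι) L =
      Complex.exp (-(((∑ i, L (Pi.single i 1) ^ 2) / 2 : ℝ) : ℂ)) := by
  rw [charFunDual_pi]
  simp_rw [charFunDual_gaussianReal_zero_one]
  rw [← Complex.exp_sum, Finset.sum_div, Complex.ofReal_sum, Finset.sum_neg_distrib]
  rfl

lemma sum_apply_sub_mul_apply_sq [DecidableEq ι] {v : ι → ℝ} (hv : v ⬝ᵥ v = 1)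
    (L : StrongDual ℝ (ι → ℝ)) :
    ∑ i, (L (Pi.single i 1) - v i * L v) ^ 2 = ∑ i, L (Pi.single i 1) ^ 2 - L v ^ 2 := by
  have hLv : L v = ∑ i, v i * L (Pi.single i 1) := by
    conv_lhs => rw [pi_eq_sum_univ' v, map_sum]
    exact Finset.sum_congr rfl fun i _ => by rw [map_smul, smul_eq_mul]
  have hexpand : ∑ i, (L (Pi.single i 1) - v i * L v) ^ 2 = ∑ i, L (Pi.single i 1) ^ 2 -
      2 * L v * (∑ i, v i * L (Pi.single i 1)) + L v ^ 2 * (v ⬝ᵥ v) := by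
    simp only [dotProduct, Finset.mul_sum, ← Finset.sum_sub_distrib, ← Finset.sum_add_distrib]
    exact Finset.sum_congr rfl fun i _ => by ring
  rw [hexpand, ← hLv, hv]
  ring

lemma map_resample_gaussianPi {v : ι → ℝ} (hv : v ⬝ᵥ v = 1) :
    ((gaussianPi ι).prod (gaussianReal 0 1)).map (resample v) = gaussianPi ι := by
  classical
  have : IsProbabilityMeasure (((gaussianPi ι).prod (gaussianReal 0 1)).map (resample v)) :=
    Measure.isProbabilityMeasure_map (by fun_prop)
  refine Measure.ext_of_charFunDual (funext fun L => ?_)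
  have hinl : ∀ i, (L.comp (resample v)).comp (ContinuousLinearMap.inl ℝ (ι → ℝ) ℝ)
      (Pi.single i 1) = L (Pi.single i 1) - v i * L v := fun i => by
    simp only [ContinuousLinearMap.comp_apply, ContinuousLinearMap.inl_apply, resample_apply,
      zero_smul, add_zero, map_sub, map_smul, smul_eq_mul, dotProduct_single_one]
  have hinr : (L.comp (resample v)).comp (ContinuousLinearMap.inr ℝ (ι → ℝ) ℝ) 1 = L v := by
    simp only [ContinuousLinearMap.comp_apply, ContinuousLinearMap.inr_apply, resample_apply,
      dotProduct_zero, zero_smul, sub_zero, zero_add, one_smul]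
  rw [charFunDual_map, charFunDual_prod, charFunDual_gaussianPi, charFunDual_gaussianPi,
    charFunDual_gaussianReal_zero_one, ← Complex.exp_add, hinr]
  simp_rw [hinl, sum_apply_sub_mul_apply_sq hv]
  push_cast
  ring_nf

lemma abs_integral_gaussianPi_le_of_lines {v : ι → ℝ} (hv : v ⬝ᵥ v = 1) {F G : (ι → ℝ) → ℝ}
    (hF : Integrable F (gaussianPi ι)) (hG : Integrable G (gaussianPi ι)) {c : ℝ}
    (hFG : ∀ y : ι → ℝ, |∫ z, F (y + z • v) ∂(gaussianReal 0 1)| ≤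
      c * ∫ z, G (y + z • v) ∂(gaussianReal 0 1)) :
    |∫ x, F x ∂(gaussianPi ι)| ≤ c * ∫ x, G x ∂(gaussianPi ι) := by
  have hprod : ∀ {H : (ι → ℝ) → ℝ}, Integrable H (gaussianPi ι) →
      Integrable (H ∘ resample v) ((gaussianPi ι).prod (gaussianReal 0 1)) := fun {H} hH => by
    rw [← map_resample_gaussianPi hv] at hH
    exact hH.comp_measurable (by fun_prop)
  have hfubini : ∀ {H : (ι → ℝ) → ℝ}, Integrable H (gaussianPi ι) → ∫ x, H x ∂(gaussianPi ι) =
      ∫ x, ∫ z, H (resample v (x, z)) ∂(gaussianReal 0 1) ∂(gaussianPi ι) := fun {H} hH => by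
    conv_lhs => rw [← map_resample_gaussianPi hv]
    rw [integral_map (by fun_prop) (by rw [map_resample_gaussianPi hv]; exact hH.1)]
    exact integral_prod _ (hprod hH)
  rw [hfubini hF, hfubini hG, ← integral_const_mul]
  refine abs_integral_le_integral ((hprod hG).integral_prod_left.const_mul c) fun x => ?_
  simpa only [resample_apply] using hFG (x - (v ⬝ᵥ x) • v)

lemma abs_integral_gaussianPi_le_of_forall_line {v : ι → ℝ} (hv : v ⬝ᵥ v = 1) {F : (ι → ℝ) → ℝ}
    (hF : Integrable F (gaussianPi ι)) {c : ℝ}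
    (hFc : ∀ y : ι → ℝ, |∫ z, F (y + z • v) ∂(gaussianReal 0 1)| ≤ c) :
    |∫ x, F x ∂(gaussianPi ι)| ≤ c := by
  simpa using abs_integral_gaussianPi_le_of_lines hv hF (integrable_const 1) (c := c)
    (by simpa using hFc)

end Resampling

/-! ### Restriction of polynomials to lines -/

section PDeriv

variable {R σ : Type*} [CommSemiring R]

lemma add_single_mem_support_of_mem_support_pderiv {g : MvPolynomial σ R} {i : σ} {k : σ →₀ ℕ}
    (hk : k ∈ (MvPolynomial.pderiv i g).support) : k + Finsupp.single i 1 ∈ g.support := by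
  rw [MvPolynomial.mem_support_iff, MvPolynomial.coeff_pderiv] at hk
  exact MvPolynomial.mem_support_iff.mpr (left_ne_zero_of_mul hk)

lemma degreeOf_pderiv_le (g : MvPolynomial σ R) (i j : σ) :
    (MvPolynomial.pderiv i g).degreeOf j ≤ g.degreeOf j := by
  refine MvPolynomial.degreeOf_le_iff.mpr fun k hk => ?_
  have hle := MvPolynomial.monomial_le_degreeOf j (add_single_mem_support_of_mem_support_pderiv hk)
  rw [Finsupp.add_apply] at hle
  omega

lemma totalDegree_pderiv_le (g : MvPolynomial σ R) (i : σ) :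
    (MvPolynomial.pderiv i g).totalDegree ≤ g.totalDegree - 1 := by
  refine Finset.sup_le fun k hk => ?_
  have hle := MvPolynomial.le_totalDegree (add_single_mem_support_of_mem_support_pderiv hk)
  change (k + Finsupp.single i 1).degree ≤ _ at hle
  rw [map_add, Finsupp.degree_single] at hle
  change k.degree ≤ _
  omega

/-- Differentiating in a variable that occurs in the monomial `j` multiplies the coefficient by a
positive integer. -/
lemma exists_abs_coeff_le_abs_coeff_pderiv (g : MvPolynomial σ ℝ) {j : σ →₀ ℕ} {r : ℕ}
    (hj : j.degree = r + 1) : ∃ i, ∃ k : σ →₀ ℕ, k.degree = r ∧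
      |g.coeff j| ≤ |(MvPolynomial.pderiv i g).coeff k| := by
  obtain ⟨i, hi⟩ : ∃ i, j i ≠ 0 := by
    by_contra! hzero
    simp [show j = 0 from Finsupp.ext hzero] at hj
  have hadd : (j - Finsupp.single i 1) + Finsupp.single i 1 = j :=
    tsub_add_cancel_of_le (Finsupp.single_le_iff.mpr (Nat.one_le_iff_ne_zero.mpr hi))
  refine ⟨i, j - Finsupp.single i 1, ?_, ?_⟩
  · have hdeg := congrArg Finsupp.degree hadd
    rw [map_add, Finsupp.degree_single, hj] at hdeg
    omega
  · rw [MvPolynomial.coeff_pderiv, hadd, abs_mul]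
    refine le_mul_of_one_le_right (abs_nonneg _) ((le_abs_self _).trans' ?_)
    exact le_add_of_nonneg_left (Nat.cast_nonneg _)

end PDeriv

lemma eval_smul_of_isHomogeneous {R σ : Type*} [CommSemiring R] {h : MvPolynomial σ R} {D : ℕ}
    (hh : h.IsHomogeneous D) (c : R) (v : σ → R) :
    MvPolynomial.eval (c • v) h = c ^ D * MvPolynomial.eval v h := by
  rw [MvPolynomial.eval_eq, MvPolynomial.eval_eq, Finset.mul_sum]
  refine Finset.sum_congr rfl fun k hk => ?_
  simp only [Pi.smul_apply, smul_eq_mul, mul_pow, Finset.prod_mul_distrib,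
    Finset.prod_pow_eq_pow_sum, hh.degree_eq_sum_deg_support hk]
  ring

lemma coeff_prod_sum_of_natDegree_le {R ι : Type*} [CommSemiring R] (s : Finset ι)
    {f : ι → Polynomial R} {n : ι → ℕ} (hf : ∀ i ∈ s, (f i).natDegree ≤ n i) :
    (∏ i ∈ s, f i).coeff (∑ i ∈ s, n i) = ∏ i ∈ s, (f i).coeff (n i) := by
  classical
  induction s using Finset.induction_on with
  | empty => simp
  | insert a s ha ih =>
    obtain ⟨hfa, hfs⟩ := Finset.forall_mem_insert _ _ _ |>.mp hf
    rw [Finset.prod_insert ha, Finset.sum_insert ha, Finset.prod_insert ha,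
      Polynomial.coeff_mul_add_eq_of_natDegree_le hfa
        ((Polynomial.natDegree_prod_le _ _).trans (Finset.sum_le_sum hfs)), ih hfs]

section LinePoly

variable {R σ : Type*} [CommSemiring R] (y v : σ → R) (g : MvPolynomial σ R)

/-- The restriction `t ↦ g (y + t v)` of a polynomial to a line. -/
noncomputable def linePoly : Polynomial R :=
  MvPolynomial.aeval (fun i => Polynomial.C (y i) + Polynomial.C (v i) * Polynomial.X) g

lemma eval_linePoly (t : R) : (linePoly y v g).eval t = MvPolynomial.eval (y + t • v) g := by
  induction g using MvPolynomial.induction_on with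
  | C a => simp [linePoly]
  | add p q hp hq => simp_all [linePoly]
  | mul_X p i hp =>
    simp_all only [linePoly, map_mul, MvPolynomial.aeval_X, MvPolynomial.eval_X,
      Polynomial.eval_mul, Polynomial.eval_add, Polynomial.eval_C, Polynomial.eval_X, Pi.add_apply,
      Pi.smul_apply, smul_eq_mul, mul_comm]

lemma linePoly_eq_sum : linePoly y v g = ∑ k ∈ g.support, Polynomial.C (g.coeff k) *
    ∏ i ∈ k.support, (Polynomial.C (y i) + Polynomial.C (v i) * Polynomial.X) ^ k i := by
  rw [linePoly, MvPolynomial.aeval_def, MvPolynomial.eval₂_eq]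
  rfl

lemma natDegree_line_pow_le (i : σ) (k : ℕ) :
    ((Polynomial.C (y i) + Polynomial.C (v i) * Polynomial.X) ^ k).natDegree ≤ k := by
  compute_degree

lemma natDegree_line_monomial_le (k : σ →₀ ℕ) :
    (∏ i ∈ k.support, (Polynomial.C (y i) + Polynomial.C (v i) * Polynomial.X) ^ k i).natDegree ≤
      k.degree :=
  (Polynomial.natDegree_prod_le _ _).trans
    (Finset.sum_le_sum fun i _ => natDegree_line_pow_le y v i (k i))

lemma natDegree_linePoly_le : (linePoly y v g).natDegree ≤ g.totalDegree := by
  rw [linePoly_eq_sum]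
  refine Polynomial.natDegree_sum_le_of_forall_le _ _ fun k hk => ?_
  exact (Polynomial.natDegree_C_mul_le _ _).trans
    ((natDegree_line_monomial_le y v k).trans (MvPolynomial.le_totalDegree hk))

lemma natDegree_linePoly_single_le [DecidableEq σ] (i : σ) :
    (linePoly y (Pi.single i 1) g).natDegree ≤ g.degreeOf i := by
  rw [linePoly_eq_sum]
  refine Polynomial.natDegree_sum_le_of_forall_le _ _ fun k hk => ?_
  refine (Polynomial.natDegree_C_mul_le _ _).trans ?_
  refine (Polynomial.natDegree_prod_le _ _).trans (le_trans ?_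
    (MvPolynomial.monomial_le_degreeOf i hk))
  calc _ ≤ ∑ j ∈ k.support, if j = i then k i else 0 := Finset.sum_le_sum fun j _ => ?_
    _ ≤ k i := by
      rw [Finset.sum_ite_eq']
      split_ifs <;> simp
  split_ifs with hji
  · exact hji ▸ natDegree_line_pow_le y _ j (k j)
  · rw [Pi.single_eq_of_ne hji, Polynomial.C_0, zero_mul, add_zero, ← Polynomial.C_pow,
      Polynomial.natDegree_C]

lemma coeff_line_monomial (k : σ →₀ ℕ) :
    (∏ i ∈ k.support, (Polynomial.C (y i) + Polynomial.C (v i) * Polynomial.X) ^ k i).coeff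
      k.degree = k.prod fun i e => v i ^ e := by
  rw [Finsupp.degree_apply, coeff_prod_sum_of_natDegree_le _
    fun i _ => natDegree_line_pow_le y v i (k i)]
  refine Finset.prod_congr rfl fun i _ => ?_
  have hpow := Polynomial.coeff_pow_of_natDegree_le (m := k i) (n := 1)
    (p := Polynomial.C (y i) + Polynomial.C (v i) * Polynomial.X) (by compute_degree)
  rw [mul_one] at hpow
  simp [hpow]

variable {g} in
lemma coeff_linePoly {D : ℕ} (hg : g.totalDegree ≤ D) :
    (linePoly y v g).coeff D = MvPolynomial.eval v (MvPolynomial.homogeneousComponent D g) := by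
  rw [linePoly_eq_sum, Polynomial.finsetSum_coeff, MvPolynomial.homogeneousComponent_apply, map_sum,
    Finset.sum_filter]
  refine Finset.sum_congr rfl fun k hk => ?_
  rw [Polynomial.coeff_C_mul]
  split_ifs with hkD
  · rw [MvPolynomial.eval_monomial, ← hkD, coeff_line_monomial]
  · have hlt : k.degree < D :=
      lt_of_le_of_ne ((MvPolynomial.le_totalDegree hk).trans hg) hkD
    rw [Polynomial.coeff_eq_zero_of_natDegree_lt
      ((natDegree_line_monomial_le y v k).trans_lt hlt), mul_zero]

lemma derivative_linePoly_single [DecidableEq σ] (i : σ) :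
    (linePoly y (Pi.single i 1) g).derivative =
      linePoly y (Pi.single i 1) (MvPolynomial.pderiv i g) := by
  induction g using MvPolynomial.induction_on with
  | C a => simp [linePoly]
  | add p q hp hq => simp_all [linePoly]
  | mul_X p j hp =>
    obtain rfl | hij := eq_or_ne i j
    · simp_all only [linePoly, map_mul, MvPolynomial.aeval_X, Pi.single_eq_same, map_one, one_mul,
        Polynomial.derivative_mul, Polynomial.derivative_C, Polynomial.derivative_X, zero_add,
        mul_one, Derivation.leibniz, MvPolynomial.pderiv_X, smul_eq_mul, map_add]
      ring
    · simp_all only [linePoly, ne_eq, map_mul, MvPolynomial.aeval_X, Ne.symm hij,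
        not_false_eq_true, Pi.single_eq_of_ne, map_zero, zero_mul, add_zero,
        Polynomial.derivative_mul, Polynomial.derivative_C, mul_zero, Derivation.leibniz,
        MvPolynomial.pderiv_X, smul_eq_mul, zero_add]
      ring

lemma eval_pderiv_eq_coeff_linePoly [DecidableEq σ] (i : σ) :
    MvPolynomial.eval y (MvPolynomial.pderiv i g) = (linePoly y (Pi.single i 1) g).coeff 1 := by
  have heval := eval_linePoly y (Pi.single i 1) (MvPolynomial.pderiv i g) 0
  rw [← derivative_linePoly_single, zero_smul, add_zero, ← Polynomial.coeff_zero_eq_eval_zero,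
    Polynomial.coeff_derivative] at heval
  simpa using heval.symm

end LinePoly

/-! ### A good direction -/

section GoodDirection

/-- A constant `B`, depending only on `m`, such that every real polynomial `p` of degree at most `m`
satisfies `coeffNorm p ≤ B * |p x|` for some `x ∈ [-1, 1]`. -/
noncomputable def normingConst (m : ℕ) : ℝ := (32 * m / unitMass) ^ m

lemma one_le_normingConst {m : ℕ} (hm : 1 ≤ m) : 1 ≤ normingConst m := by
  have hm' : (1 : ℝ) ≤ m := by exact_mod_cast hm
  have hmass : unitMass ≤ 1 := measureReal_le_one
  refine one_le_pow₀ ((one_le_div unitMass_pos).mpr ?_)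
  linarith

/-- Otherwise `|p|` would be so small on all of `[-1, 1]` that the small ball estimate gives this
interval at most half of its Gaussian mass. -/
lemma exists_coeffNorm_le_normingConst_mul {m : ℕ} (hm : 1 ≤ m) {p : Polynomial ℝ}
    (hdeg : p.natDegree ≤ m) : ∃ x : ℝ, |x| ≤ 1 ∧ coeffNorm p ≤ normingConst m * |p.eval x| := by
  obtain rfl | hp := eq_or_ne p 0
  · exact ⟨0, by simp, by simp [coeffNorm]⟩
  by_contra! hsmall
  have hmass := unitMass_pos
  have : (0 : ℝ) < m := by exact_mod_cast hm
  have hB : 0 < normingConst m := zero_lt_one.trans_le (one_le_normingConst hm)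
  have hsub : Set.Icc (-1 : ℝ) 1 ⊆ {x | |p.eval x| ≤ (normingConst m)⁻¹ * coeffNorm p} :=
    fun x hx => (le_inv_mul_iff₀ hB).mpr (hsmall x (abs_le.mpr hx)).le
  have hroot : (normingConst m)⁻¹ ^ (m : ℝ)⁻¹ = unitMass / (32 * m) := by
    rw [Real.inv_rpow hB.le, normingConst, Real.pow_rpow_inv_natCast (by positivity) (by omega),
      inv_div]
  have hhalf : unitMass ≤ 16 * m * (unitMass / (32 * m)) := hroot ▸
    (measureReal_mono hsub).trans (gaussianReal_abs_eval_le hm hp hdeg (inv_pos.mpr hB))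
  have heq : 16 * m * (unitMass / (32 * m)) = unitMass / 2 := by
    field_simp
    norm_num
  linarith

variable {ι : Type*} [Fintype ι]

lemma sum_abs_add_smul_single_le [DecidableEq ι] (w : ι → ℝ) (x : ℝ) (i : ι) :
    ∑ l, |(w + x • (Pi.single i 1 : ι → ℝ)) l| ≤ ∑ l, |w l| + |x| := by
  calc ∑ l, |(w + x • (Pi.single i 1 : ι → ℝ)) l|
      ≤ ∑ l, (|w l| + |(Pi.single i x : ι → ℝ) l|) := Finset.sum_le_sum fun l _ => by
        rw [← Pi.single_smul, smul_eq_mul, mul_one]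
        exact abs_add_le _ _
    _ = ∑ l, |w l| + |x| := by
        simp [Finset.sum_add_distrib, Pi.single_apply, apply_ite abs]

/-- Each partial derivative of `g` at a point is a coefficient of `g` along a line through it, so a
norming point of that line moves the point by at most `1` and trades the derivative for `g`. -/
lemma exists_abs_coeff_le_abs_eval {m : ℕ} (hm : 1 ≤ m) {r : ℕ} {g : MvPolynomial ι ℝ}
    (hg : ∀ i, g.degreeOf i ≤ m) {j : ι →₀ ℕ} (hj : j.degree = r) :
    ∃ w : ι → ℝ, ∑ i, |w i| ≤ r ∧
      |g.coeff j| ≤ normingConst m ^ r * |MvPolynomial.eval w g| := by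
  classical
  induction r generalizing g j with
  | zero =>
    obtain rfl : j = 0 := (Finsupp.degree_eq_zero_iff j).mp hj
    exact ⟨0, by simp, by simp [MvPolynomial.constantCoeff_eq]⟩
  | succ r ih =>
    obtain ⟨i, k, hk, hcoeff⟩ := exists_abs_coeff_le_abs_coeff_pderiv g hj
    obtain ⟨w, hw, hwg⟩ := ih (fun l => (degreeOf_pderiv_le g i l).trans (hg l)) hk
    obtain ⟨x, hx, hxg⟩ := exists_coeffNorm_le_normingConst_mul hm
      ((natDegree_linePoly_single_le w g i).trans (hg i))
    have hB : 0 ≤ normingConst m := zero_le_one.trans (one_le_normingConst hm)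
    refine ⟨w + x • Pi.single i 1, ?_, ?_⟩
    · push_cast
      exact (sum_abs_add_smul_single_le w x i).trans (add_le_add hw hx)
    · rw [eval_pderiv_eq_coeff_linePoly w g i] at hwg
      rw [eval_linePoly] at hxg
      calc |g.coeff j| ≤ normingConst m ^ r * |(linePoly w (Pi.single i 1) g).coeff 1| :=
            hcoeff.trans hwg
        _ ≤ normingConst m ^ r *
            (normingConst m * |MvPolynomial.eval (w + x • Pi.single i 1) g|) := by
          gcongr
          exact (norm_coeff_le_coeffNorm _ 1).trans hxg
        _ = _ := by rw [pow_succ, mul_assoc]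

lemma exists_unit_abs_eval_le {D : ℕ} {h : MvPolynomial ι ℝ} (hh : h.IsHomogeneous D) {w : ι → ℝ}
    (hw : w ≠ 0) : ∃ v : ι → ℝ, v ⬝ᵥ v = 1 ∧
      |MvPolynomial.eval w h| ≤ (∑ i, |w i|) ^ D * |MvPolynomial.eval v h| := by
  have hpos : 0 < w ⬝ᵥ w :=
    (Finset.sum_nonneg fun i _ => mul_self_nonneg (w i)).lt_of_ne'
      (dotProduct_self_eq_zero.not.mpr hw)
  set R := √(w ⬝ᵥ w) with hR
  have hR0 : 0 < R := Real.sqrt_pos.mpr hpos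
  have hRsum : R ≤ ∑ i, |w i| := by
    rw [hR, Real.sqrt_le_left (by positivity)]
    calc w ⬝ᵥ w = ∑ i, |w i| ^ 2 := by simp [dotProduct, sq]
      _ ≤ (∑ i, |w i|) ^ 2 := Finset.sum_sq_le_sq_sum_of_nonneg fun i _ => abs_nonneg _
  refine ⟨R⁻¹ • w, ?_, ?_⟩
  · rw [smul_dotProduct, dotProduct_smul, smul_eq_mul, smul_eq_mul, ← Real.mul_self_sqrt hpos.le,
      ← hR]
    field_simp
  · have heval := eval_smul_of_isHomogeneous hh R (R⁻¹ • w)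
    rw [smul_smul, mul_inv_cancel₀ hR0.ne', one_smul] at heval
    rw [heval, abs_mul, abs_of_pos (pow_pos hR0 D)]
    gcongr

/-- A constant `A`, depending only on `m`, such that every coefficient of degree `1 ≤ D ≤ m` of a
polynomial `g` in any number of variables is at most `A * |g_D v|` for some unit vector `v`, where
`g_D` is the component of `g` of degree `D`. -/
noncomputable def directionConst (m : ℕ) : ℝ := (normingConst m * m) ^ m

lemma one_le_normingConst_mul {m : ℕ} (hm : 1 ≤ m) : 1 ≤ normingConst m * m :=
  one_le_mul_of_one_le_of_one_le (one_le_normingConst hm) (by exact_mod_cast hm)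

lemma one_le_directionConst {m : ℕ} (hm : 1 ≤ m) : 1 ≤ directionConst m :=
  one_le_pow₀ (one_le_normingConst_mul hm)

lemma exists_unit_abs_coeff_le {m D : ℕ} (hD : 1 ≤ D) (hDm : D ≤ m) {g : MvPolynomial ι ℝ}
    {j : ι →₀ ℕ} (hj : j.degree = D) (hne : g.coeff j ≠ 0) : ∃ v : ι → ℝ, v ⬝ᵥ v = 1 ∧
      |g.coeff j| ≤
        directionConst m * |MvPolynomial.eval v (MvPolynomial.homogeneousComponent D g)| := by
  have hm : 1 ≤ m := hD.trans hDm
  set h := MvPolynomial.homogeneousComponent D g with hdef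
  have hh : h.IsHomogeneous D := MvPolynomial.homogeneousComponent_isHomogeneous D g
  have hcoeff : h.coeff j = g.coeff j := by
    rw [hdef, MvPolynomial.coeff_homogeneousComponent, if_pos hj]
  obtain ⟨w, hw, hwh⟩ := exists_abs_coeff_le_abs_eval hm (g := h) (fun i =>
    ((MvPolynomial.degreeOf_le_totalDegree h i).trans hh.totalDegree_le).trans hDm) hj
  rw [hcoeff] at hwh
  have hw0 : w ≠ 0 := by
    rintro rfl
    have hzero : MvPolynomial.eval (0 : ι → ℝ) h = 0 := by
      simpa [zero_pow (by omega : D ≠ 0)] using eval_smul_of_isHomogeneous hh 0 (0 : ι → ℝ)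
    rw [hzero, abs_zero, mul_zero] at hwh
    exact hne (abs_nonpos_iff.mp hwh)
  obtain ⟨v, hv, hvw⟩ := exists_unit_abs_eval_le hh hw0
  refine ⟨v, hv, hwh.trans ?_⟩
  have hB : 0 ≤ normingConst m := zero_le_one.trans (one_le_normingConst hm)
  have hwm : ∑ i, |w i| ≤ m := hw.trans (by exact_mod_cast hDm)
  calc normingConst m ^ D * |MvPolynomial.eval w h|
      ≤ normingConst m ^ D * ((∑ i, |w i|) ^ D * |MvPolynomial.eval v h|) := by gcongr
    _ = (normingConst m * ∑ i, |w i|) ^ D * |MvPolynomial.eval v h| := by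
        rw [mul_pow, mul_assoc]
    _ ≤ (normingConst m * m) ^ D * |MvPolynomial.eval v h| := by gcongr
    _ ≤ directionConst m * |MvPolynomial.eval v h| := by
        gcongr
        exact pow_le_pow_right₀ (one_le_normingConst_mul hm) hDm

end GoodDirection

/-! ### The multivariate estimate -/

lemma measurable_eval_mvPolynomial {ι : Type*} [Countable ι] (g : MvPolynomial ι ℝ) :
    Measurable fun x : ι → ℝ => MvPolynomial.eval x g :=
  (MvPolynomial.continuous_eval g).measurable

lemma abs_coeff_le_coeffNorm_derivative (p : Polynomial ℝ) {i : ℕ} (hi : 1 ≤ i) :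
    |p.coeff i| ≤ coeffNorm p.derivative := by
  refine le_trans ?_ (norm_coeff_le_coeffNorm p.derivative (i - 1))
  rw [Polynomial.coeff_derivative, Nat.sub_add_cancel hi, Real.norm_eq_abs, abs_mul]
  refine le_mul_of_one_le_right (abs_nonneg _) ((le_abs_self _).trans' ?_)
  exact le_add_of_nonneg_left (Nat.cast_nonneg _)

section Multivariate

variable {ι : Type*} [Fintype ι] {m : ℕ} {ε a : ℝ}

lemma integrable_weight_abs_eval (hε : 0 < ε) (g : MvPolynomial ι ℝ) :
    Integrable (fun x => weight (m : ℝ)⁻¹ ε a |MvPolynomial.eval x g|) (gaussianPi ι) :=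
  integrable_weight_comp (by positivity) hε (measurable_eval_mvPolynomial g).abs

lemma abs_integral_weight_abs_eval (hε : 0 < ε) {Ω : Type*} [MeasurableSpace Ω] (μ : Measure Ω)
    (g : Ω → ℝ) : |∫ x, weight (m : ℝ)⁻¹ ε a |g x| ∂μ| = ∫ x, weight (m : ℝ)⁻¹ ε a |g x| ∂μ :=
  abs_of_nonneg (integral_nonneg fun _ => weight_nonneg hε)

lemma weight_le_mul_of_le_mul (hm : 1 ≤ m) (hε : 0 < ε) (hεa : ε ≤ a) {A y : ℝ} (hA : 1 ≤ A)
    (hy : a ≤ A * y) : weight (m : ℝ)⁻¹ ε a y ≤ A * (ε / a) ^ (m : ℝ)⁻¹ := by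
  rw [← weight_of_le hεa hy]
  exact weight_le_mul_weight_mul (by positivity) (Nat.cast_inv_le_one m) hε (hε.trans_le hεa).le hA

/-- The cost of one partial derivative, or of the final good direction, apart from the factor
`1 + log (a / ε)`. -/
noncomputable def peelConst (m : ℕ) : ℝ := 16 * m * max (directionConst m) (m * unitMass⁻¹)

lemma one_le_peelConst (hm : 1 ≤ m) : 1 ≤ peelConst m := by
  have hm' : (1 : ℝ) ≤ m := by exact_mod_cast hm
  exact one_le_mul_of_one_le_of_one_le (by linarith)
    ((one_le_directionConst hm).trans (le_max_left _ _))

lemma integral_weight_abs_eval_le_integral_pderiv (hm : 1 ≤ m) {g : MvPolynomial ι ℝ} {i : ι}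
    (hg : g.degreeOf i ≤ m) (hε : 0 < ε) (hεa : ε ≤ a) :
    ∫ x, weight (m : ℝ)⁻¹ ε a |MvPolynomial.eval x g| ∂(gaussianPi ι) ≤
      peelConst m * (1 + Real.log (a / ε)) *
        ∫ x, weight (m : ℝ)⁻¹ ε a |MvPolynomial.eval x (MvPolynomial.pderiv i g)|
          ∂(gaussianPi ι) := by
  classical
  have hlog : 0 ≤ Real.log (a / ε) := Real.log_nonneg ((one_le_div hε).mpr hεa)
  refine (le_abs_self _).trans (abs_integral_gaussianPi_le_of_lines (v := Pi.single i 1) (by simp)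
    (integrable_weight_abs_eval hε g) (integrable_weight_abs_eval hε _) fun y => ?_)
  rw [abs_integral_weight_abs_eval hε]
  simp_rw [← eval_linePoly, ← derivative_linePoly_single]
  set p := linePoly y (Pi.single i 1) g
  have hp : p.natDegree ≤ m := (natDegree_linePoly_single_le y g i).trans hg
  calc ∫ z, weight (m : ℝ)⁻¹ ε a |p.eval z| ∂(gaussianReal 0 1)
      ≤ 16 * m * (1 + Real.log (a / ε)) * weight (m : ℝ)⁻¹ ε a (coeffNorm p) :=
        integral_weight_abs_eval_le hm hp hε hεa
    _ ≤ 16 * m * (1 + Real.log (a / ε)) *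
          (m * (unitMass⁻¹ *
            ∫ z, weight (m : ℝ)⁻¹ ε a |p.derivative.eval z| ∂(gaussianReal 0 1))) := by
        gcongr
        exact weight_coeffNorm_le_integral_derivative (by positivity) (Nat.cast_inv_le_one m) hε
          (hε.le.trans hεa) hm hp
    _ = 16 * m * (m * unitMass⁻¹) * (1 + Real.log (a / ε)) *
          ∫ z, weight (m : ℝ)⁻¹ ε a |p.derivative.eval z| ∂(gaussianReal 0 1) := by ring
    _ ≤ _ := by
        unfold peelConst
        gcongr
        · exact integral_nonneg fun _ => weight_nonneg hε
        · exact le_max_right _ _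

lemma integral_weight_abs_eval_le_of_degree_eq (hm : 1 ≤ m) {g : MvPolynomial ι ℝ}
    (hg : g.totalDegree ≤ m) {j : ι →₀ ℕ} (hj : j.degree = m) (hε : 0 < ε) (hεa : ε ≤ a)
    (ha : a ≤ |g.coeff j|) :
    ∫ x, weight (m : ℝ)⁻¹ ε a |MvPolynomial.eval x g| ∂(gaussianPi ι) ≤
      peelConst m * (1 + Real.log (a / ε)) * (ε / a) ^ (m : ℝ)⁻¹ := by
  have hlog : 0 ≤ Real.log (a / ε) := Real.log_nonneg ((one_le_div hε).mpr hεa)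
  have ha0 : 0 < a := hε.trans_le hεa
  have hA := one_le_directionConst hm
  obtain ⟨v, hv, hvg⟩ := exists_unit_abs_coeff_le hm le_rfl hj (abs_pos.mp (ha0.trans_le ha))
  refine (le_abs_self _).trans (abs_integral_gaussianPi_le_of_forall_line hv
    (integrable_weight_abs_eval hε g) fun y => ?_)
  rw [abs_integral_weight_abs_eval hε]
  simp_rw [← eval_linePoly]
  set p := linePoly y v g
  have hnorm : a ≤ directionConst m * coeffNorm p := by
    rw [← coeff_linePoly y v hg] at hvg
    refine (ha.trans hvg).trans ?_
    gcongr
    exact norm_coeff_le_coeffNorm p m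
  calc ∫ z, weight (m : ℝ)⁻¹ ε a |p.eval z| ∂(gaussianReal 0 1)
      ≤ 16 * m * (1 + Real.log (a / ε)) * weight (m : ℝ)⁻¹ ε a (coeffNorm p) :=
        integral_weight_abs_eval_le hm ((natDegree_linePoly_le y v g).trans hg) hε hεa
    _ ≤ 16 * m * (1 + Real.log (a / ε)) * (directionConst m * (ε / a) ^ (m : ℝ)⁻¹) := by
        gcongr
        exact weight_le_mul_of_le_mul hm hε hεa hA hnorm
    _ = 16 * m * directionConst m * (1 + Real.log (a / ε)) * (ε / a) ^ (m : ℝ)⁻¹ := by ring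
    _ ≤ _ := by
        unfold peelConst
        gcongr
        exact le_max_left _ _

lemma integral_weight_abs_eval_le_of_degree_eq_add (hm : 1 ≤ m) {r : ℕ} {g : MvPolynomial ι ℝ}
    (hdegOf : ∀ i, g.degreeOf i ≤ m) (hdeg : g.totalDegree ≤ m + r) {j : ι →₀ ℕ}
    (hj : j.degree = m + r) (hε : 0 < ε) (hεa : ε ≤ a) (ha : a ≤ |g.coeff j|) :
    ∫ x, weight (m : ℝ)⁻¹ ε a |MvPolynomial.eval x g| ∂(gaussianPi ι) ≤
      (peelConst m * (1 + Real.log (a / ε))) ^ (r + 1) * (ε / a) ^ (m : ℝ)⁻¹ := by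
  induction r generalizing g j with
  | zero => simpa using integral_weight_abs_eval_le_of_degree_eq hm hdeg hj hε hεa ha
  | succ r ih =>
    have hlog : 0 ≤ Real.log (a / ε) := Real.log_nonneg ((one_le_div hε).mpr hεa)
    have hK : 0 ≤ peelConst m := zero_le_one.trans (one_le_peelConst hm)
    obtain ⟨i, k, hk, hcoeff⟩ := exists_abs_coeff_le_abs_coeff_pderiv (r := m + r) g hj
    have hpderiv := ih (fun l => (degreeOf_pderiv_le g i l).trans (hdegOf l))
      ((totalDegree_pderiv_le g i).trans (by omega)) hk (ha.trans hcoeff)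
    calc _ ≤ _ := integral_weight_abs_eval_le_integral_pderiv hm (hdegOf i) hε hεa
      _ ≤ peelConst m * (1 + Real.log (a / ε)) *
          ((peelConst m * (1 + Real.log (a / ε))) ^ (r + 1) * (ε / a) ^ (m : ℝ)⁻¹) := by
        gcongr
      _ = _ := by ring

/-- The cost of the first integration by parts, either along a good direction or along a coordinate
axis. -/
noncomputable def leadConst (m : ℕ) : ℝ := 35 * m * max (directionConst m) unitMass⁻¹

lemma one_le_leadConst (hm : 1 ≤ m) : 1 ≤ leadConst m := by
  have hm' : (1 : ℝ) ≤ m := by exact_mod_cast hm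
  exact one_le_mul_of_one_le_of_one_le (by linarith)
    ((one_le_directionConst hm).trans (le_max_left _ _))

namespace IsTestFunction

variable {φ φ' : ℝ → ℝ} {f : MvPolynomial ι ℝ}

lemma abs_integral_eval_gaussianPi_le_of_degree_le (hφ : IsTestFunction ε φ φ') {D : ℕ}
    (hD : 1 ≤ D) (hDm : D ≤ m) (hdeg : f.totalDegree ≤ D) {j : ι →₀ ℕ} (hj : j.degree = D)
    (hε : 0 < ε) (hεa : ε ≤ a) (ha : a ≤ |f.coeff j|) :
    |∫ x, φ' (MvPolynomial.eval x f) ∂(gaussianPi ι)| ≤ leadConst m * (ε / a) ^ (m : ℝ)⁻¹ := by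
  have hm : 1 ≤ m := hD.trans hDm
  have ha0 : 0 < a := hε.trans_le hεa
  have hA := one_le_directionConst hm
  obtain ⟨v, hv, hvf⟩ := exists_unit_abs_coeff_le hD hDm hj (abs_pos.mp (ha0.trans_le ha))
  refine abs_integral_gaussianPi_le_of_forall_line hv
    (hφ.integrable_deriv_comp (measurable_eval_mvPolynomial f)) fun y => ?_
  simp_rw [← eval_linePoly]
  set p := linePoly y v f
  have hnorm : a ≤ directionConst m * coeffNorm p.derivative := by
    rw [← coeff_linePoly y v hdeg] at hvf
    refine (ha.trans hvf).trans ?_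
    gcongr
    exact abs_coeff_le_coeffNorm_derivative p hD
  calc |∫ z, φ' (p.eval z) ∂(gaussianReal 0 1)|
      ≤ 35 * m * weight (m : ℝ)⁻¹ ε a (coeffNorm p.derivative) :=
        hφ.abs_integral_eval_le_weight hε hm
          ((natDegree_linePoly_le y v f).trans (hdeg.trans hDm)) a
    _ ≤ 35 * m * (directionConst m * (ε / a) ^ (m : ℝ)⁻¹) := by
        gcongr
        exact weight_le_mul_of_le_mul hm hε hεa hA hnorm
    _ = 35 * m * directionConst m * (ε / a) ^ (m : ℝ)⁻¹ := by ring
    _ ≤ _ := by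
        unfold leadConst
        gcongr
        exact le_max_left _ _

lemma abs_integral_eval_gaussianPi_le_integral_pderiv (hφ : IsTestFunction ε φ φ') (hm : 1 ≤ m)
    {i : ι} (hf : f.degreeOf i ≤ m) (hε : 0 < ε) (a : ℝ) :
    |∫ x, φ' (MvPolynomial.eval x f) ∂(gaussianPi ι)| ≤ leadConst m *
      ∫ x, weight (m : ℝ)⁻¹ ε a |MvPolynomial.eval x (MvPolynomial.pderiv i f)|
        ∂(gaussianPi ι) := by
  classical
  refine abs_integral_gaussianPi_le_of_lines (v := Pi.single i 1) (by simp)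
    (hφ.integrable_deriv_comp (measurable_eval_mvPolynomial f))
    (integrable_weight_abs_eval hε _) fun y => ?_
  simp_rw [← eval_linePoly, ← derivative_linePoly_single]
  set p := linePoly y (Pi.single i 1) f
  have hweight : weight (m : ℝ)⁻¹ ε a (coeffNorm p.derivative) ≤
      unitMass⁻¹ * ∫ z, weight (m : ℝ)⁻¹ ε a |p.derivative.eval z| ∂(gaussianReal 0 1) :=
    (le_inv_mul_iff₀ unitMass_pos).mpr
      (unitMass_mul_weight_coeffNorm_le (by positivity) hε p.derivative)
  calc |∫ z, φ' (p.eval z) ∂(gaussianReal 0 1)|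
      ≤ 35 * m * weight (m : ℝ)⁻¹ ε a (coeffNorm p.derivative) :=
        hφ.abs_integral_eval_le_weight hε hm ((natDegree_linePoly_single_le y f i).trans hf) a
    _ ≤ 35 * m * (unitMass⁻¹ *
          ∫ z, weight (m : ℝ)⁻¹ ε a |p.derivative.eval z| ∂(gaussianReal 0 1)) := by gcongr
    _ = 35 * m * unitMass⁻¹ *
          ∫ z, weight (m : ℝ)⁻¹ ε a |p.derivative.eval z| ∂(gaussianReal 0 1) := by ring
    _ ≤ _ := by
        unfold leadConst
        gcongr
        · exact integral_nonneg fun _ => weight_nonneg hε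
        · exact le_max_right _ _

lemma abs_integral_eval_gaussianPi_le (hφ : IsTestFunction ε φ φ') (hm : 1 ≤ m) {D : ℕ}
    (hD : 1 ≤ D) (hdegOf : ∀ i, f.degreeOf i ≤ m) (hdeg : f.totalDegree ≤ D) {j : ι →₀ ℕ}
    (hj : j.degree = D) (hε : 0 < ε) (hεa : ε ≤ a) (ha : a ≤ |f.coeff j|) :
    |∫ x, φ' (MvPolynomial.eval x f) ∂(gaussianPi ι)| ≤
      leadConst m * ((peelConst m * (1 + Real.log (a / ε))) ^ (D - m) * (ε / a) ^ (m : ℝ)⁻¹) := by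
  obtain hDm | hDm := le_or_gt D m
  · simpa [Nat.sub_eq_zero_of_le hDm] using
      hφ.abs_integral_eval_gaussianPi_le_of_degree_le hD hDm hdeg hj hε hεa ha
  · obtain ⟨r, rfl⟩ := Nat.exists_eq_add_of_lt hDm
    obtain ⟨i, k, hk, hcoeff⟩ := exists_abs_coeff_le_abs_coeff_pderiv (r := m + r) f hj
    have hpderiv := integral_weight_abs_eval_le_of_degree_eq_add hm
      (fun l => (degreeOf_pderiv_le f i l).trans (hdegOf l))
      ((totalDegree_pderiv_le f i).trans (by omega)) hk hε hεa (ha.trans hcoeff)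
    rw [show m + r + 1 - m = r + 1 by omega]
    refine (hφ.abs_integral_eval_gaussianPi_le_integral_pderiv hm (hdegOf i) hε a).trans ?_
    exact mul_le_mul_of_nonneg_left hpderiv (zero_le_one.trans (one_le_leadConst hm))

end IsTestFunction

/-- The modulus `t ^ (1 / m) (|log t| ^ (d - m) + 1)` of the theorem, as a function of
`t = ε / a[f]`. -/
noncomputable def rate (m d : ℕ) (t : ℝ) : ℝ := t ^ (m : ℝ)⁻¹ * (|Real.log t| ^ (d - m) + 1)

/-- The constant in front of `rate m d`. -/
noncomputable def rateConst (m d : ℕ) : ℝ := leadConst m * (2 * peelConst m) ^ (d - m)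

lemma one_le_rateConst (hm : 1 ≤ m) (d : ℕ) : 1 ≤ rateConst m d := by
  have hK := one_le_peelConst hm
  exact one_le_mul_of_one_le_of_one_le (one_le_leadConst hm) (one_le_pow₀ (by linarith))

lemma one_add_log_inv_pow_le {t : ℝ} (ht : 0 < t) (ht1 : t ≤ 1) (k : ℕ) :
    (1 + Real.log t⁻¹) ^ k ≤ 2 ^ k * (|Real.log t| ^ k + 1) := by
  have hlog : 0 ≤ Real.log t⁻¹ := Real.log_nonneg ((one_le_inv₀ ht).mpr ht1)
  calc (1 + Real.log t⁻¹) ^ k ≤ 2 ^ (k - 1) * (1 ^ k + Real.log t⁻¹ ^ k) :=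
        add_pow_le zero_le_one hlog k
    _ ≤ 2 ^ k * (1 ^ k + Real.log t⁻¹ ^ k) := by
        gcongr
        · norm_num
        · omega
    _ = 2 ^ k * (|Real.log t| ^ k + 1) := by
        rw [one_pow, add_comm, ← abs_of_nonneg hlog, Real.log_inv, abs_neg]

lemma IsTestFunction.abs_integral_eval_gaussianPi_le_rate {φ φ' : ℝ → ℝ} {f : MvPolynomial ι ℝ}
    (hφ : IsTestFunction ε φ φ') (hm : 1 ≤ m) {d D : ℕ} (hD : 1 ≤ D) (hDd : D ≤ d)
    (hdegOf : ∀ i, f.degreeOf i ≤ m) (hdeg : f.totalDegree ≤ D) {j : ι →₀ ℕ}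
    (hj : j.degree = D) (hε : 0 < ε) (ha0 : 0 < a) (ha : a ≤ |f.coeff j|) :
    |∫ x, φ' (MvPolynomial.eval x f) ∂(gaussianPi ι)| ≤ rateConst m d * rate m d (ε / a) := by
  obtain haε | hεa := le_total a ε
  · refine (hφ.abs_integral_deriv_comp_le_one _).trans
      (one_le_mul_of_one_le_of_one_le (one_le_rateConst hm d) ?_)
    exact one_le_mul_of_one_le_of_one_le
      (Real.one_le_rpow ((one_le_div ha0).mpr haε) (by positivity))
      (le_add_of_nonneg_left (by positivity))
  · have hlog : 0 ≤ Real.log (a / ε) := Real.log_nonneg ((one_le_div hε).mpr hεa)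
    have hK := one_le_peelConst hm
    have hlead := one_le_leadConst hm
    have hpow := one_add_log_inv_pow_le (div_pos hε ha0) ((div_le_one ha0).mpr hεa) (d - m)
    rw [inv_div] at hpow
    calc |∫ x, φ' (MvPolynomial.eval x f) ∂(gaussianPi ι)|
        ≤ leadConst m *
            ((peelConst m * (1 + Real.log (a / ε))) ^ (D - m) * (ε / a) ^ (m : ℝ)⁻¹) :=
          hφ.abs_integral_eval_gaussianPi_le hm hD hdegOf hdeg hj hε hεa ha
      _ ≤ leadConst m *
            ((peelConst m * (1 + Real.log (a / ε))) ^ (d - m) * (ε / a) ^ (m : ℝ)⁻¹) := by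
          gcongr
          exact one_le_mul_of_one_le_of_one_le hK (by linarith)
      _ ≤ leadConst m * ((peelConst m ^ (d - m) *
            (2 ^ (d - m) * (|Real.log (ε / a)| ^ (d - m) + 1))) * (ε / a) ^ (m : ℝ)⁻¹) := by
          rw [mul_pow]
          gcongr
      _ = rateConst m d * rate m d (ε / a) := by
          rw [rateConst, rate, mul_pow]
          ring

end Multivariate

/-! ### From test functions to densities -/

lemma absolutelyContinuous_of_tendsto_map_add {G : Type*} [AddGroup G] [TopologicalSpace G]
    [MeasurableSpace G] [MeasurableAdd₂ G] {μ ν : Measure G} [IsFiniteMeasure μ] [SFinite ν]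
    [ν.IsAddLeftInvariant] [ν.IsOpenPosMeasure]
    (hμ : ∀ A, MeasurableSet A →
      Filter.Tendsto (fun h => (μ.map (· + h)).real A) (nhds 0) (nhds (μ.real A))) :
    μ ≪ ν := by
  refine Measure.AbsolutelyContinuous.mk fun A hA hνA => ?_
  have hmeas : MeasurableSet {p : G × G | p.2 + p.1 ∈ A} := measurable_snd.add measurable_fst hA
  have hprod : (ν.prod μ) {p : G × G | p.2 + p.1 ∈ A} = 0 := by
    rw [Measure.prod_apply_symm hmeas, lintegral_eq_zero_of_ae_eq_zero]
    exact Filter.Eventually.of_forall fun s => (measure_preimage_add ν s A).trans hνA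
  have hnull : ∀ᵐ h ∂ν, μ ((· + h) ⁻¹' A) = 0 := Measure.measure_ae_null_of_prod_null hprod
  have hfreq : ∃ᶠ h in nhds 0, (μ.map (· + h)).real A = 0 := by
    refine (mem_closure_iff_frequently.mp (Measure.dense_of_ae hnull 0)).mono fun h hh => ?_
    rw [measureReal_def, Measure.map_apply (measurable_add_const h) hA, hh, ENNReal.toReal_zero]
  exact (measureReal_eq_zero_iff (measure_ne_top μ A)).mp
    (tendsto_nhds_unique_of_frequently_eq (hμ A hA) tendsto_const_nhds hfreq)

lemma integral_abs_le_two_mul_of_forall_abs_setIntegral_le {α : Type*} [MeasurableSpace α]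
    {ν : Measure α} {u : α → ℝ} {κ : ℝ} (hu : Measurable u) (hui : Integrable u ν)
    (h : ∀ A, MeasurableSet A → |∫ s in A, u s ∂ν| ≤ κ) : ∫ s, |u s| ∂ν ≤ 2 * κ := by
  have hpos := (abs_le.mp (h {s | 0 ≤ u s} (measurableSet_le measurable_const hu))).2
  have hneg := (abs_le.mp (h {s | u s ≤ 0} (measurableSet_le hu measurable_const))).1
  have hsplit := integral_norm_eq_pos_sub_neg hui
  simp only [Real.norm_eq_abs] at hsplit
  linarith

lemma measureReal_map_add_neg_eq_setIntegral {μ : Measure ℝ} [SigmaFinite μ] (hμ : μ ≪ volume)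
    (h : ℝ) {A : Set ℝ} (hA : MeasurableSet A) :
    (μ.map (· + -h)).real A = ∫ s in A, (μ.rnDeriv volume (s + h)).toReal := by
  have hpre : (· + h) ⁻¹' ((· + -h) ⁻¹' A) = A := by
    rw [← Set.preimage_comp]
    simp [Function.comp_def]
  rw [map_measureReal_apply (measurable_add_const _) hA, ← Measure.setIntegral_toReal_rnDeriv hμ,
    ← (measurePreserving_add_right volume h).setIntegral_preimage_emb
      (measurableEmbedding_addRight h), hpre]

/-- `HasDerivTestBound μ ε κ` bounds by `κ` the dual norm
`sup {|∫ φ' dμ| : |φ| ≤ ε, |φ'| ≤ 1}`, the quantity through which smoothness of `μ` is measured. -/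
def HasDerivTestBound (μ : Measure ℝ) (ε κ : ℝ) : Prop :=
  ∀ φ φ' : ℝ → ℝ, IsTestFunction ε φ φ' → |∫ s, φ' s ∂μ| ≤ κ

lemma isTestFunction_intervalIntegral_add {ψ : ℝ → ℝ} {ε h : ℝ} (hψ : Continuous ψ)
    (hψ01 : ∀ s, ψ s ∈ Set.Icc 0 1) (hh : |h| ≤ ε) :
    IsTestFunction ε (fun s => ∫ t in s..(s + h), ψ t) (fun s => ψ (s + h) - ψ s) where
  hasDerivAt s := by
    have hprim (u : ℝ) : HasDerivAt (fun x => ∫ t in (0 : ℝ)..x, ψ t) (ψ u) u :=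
      intervalIntegral.integral_hasDerivAt_right (hψ.intervalIntegrable _ _)
        (hψ.stronglyMeasurableAtFilter _ _) hψ.continuousAt
    refine (((hprim (s + h)).comp_add_const s h).fun_sub (hprim s)).congr_of_eventuallyEq
      (Filter.Eventually.of_forall fun u => ?_)
    exact (intervalIntegral.integral_interval_sub_left (hψ.intervalIntegrable _ _)
      (hψ.intervalIntegrable _ _)).symm
  continuous_deriv := by fun_prop
  abs_le s := by
    refine le_trans ?_ hh
    simpa using intervalIntegral.norm_integral_le_of_norm_le_const (a := s) (b := s + h) (f := ψ)
      (C := 1) fun x _ => abs_le.mpr ⟨by linarith [(hψ01 x).1], (hψ01 x).2⟩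
  abs_deriv_le_one s := by
    obtain ⟨h0, h1⟩ := hψ01 s
    obtain ⟨h0', h1'⟩ := hψ01 (s + h)
    exact abs_le.mpr ⟨by linarith, by linarith⟩

namespace HasDerivTestBound

variable {μ : Measure ℝ} [IsProbabilityMeasure μ] {ε κ h : ℝ}

lemma integral_comp_add_le (H : HasDerivTestBound μ ε κ) (hh : |h| ≤ ε) {ψ : ℝ → ℝ}
    (hψ : Continuous ψ) (hψ01 : ∀ s, ψ s ∈ Set.Icc 0 1) :
    ∫ s, ψ (s + h) ∂μ ≤ ∫ s, ψ s ∂μ + κ := by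
  have hint {χ : ℝ → ℝ} (hχ : Continuous χ) (hχ01 : ∀ s, χ s ∈ Set.Icc 0 1) : Integrable χ μ :=
    Integrable.of_mem_Icc 0 1 hχ.aemeasurable (Filter.Eventually.of_forall hχ01)
  have hbound := (abs_le.mp (H _ _ (isTestFunction_intervalIntegral_add hψ hψ01 hh))).2
  rw [integral_sub (hint (by fun_prop) fun s => hψ01 (s + h)) (hint hψ hψ01)] at hbound
  linarith

lemma measureReal_map_add_le_of_isClosed (H : HasDerivTestBound μ ε κ) (hh : |h| ≤ ε)
    {F : Set ℝ} (hF : IsClosed F) : (μ.map (· + h)).real F ≤ μ.real F + κ := by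
  have : IsProbabilityMeasure (μ.map (· + h)) := Measure.isProbabilityMeasure_map (by fun_prop)
  have hδ (n : ℕ) : (0 : ℝ) < 1 / ((n : ℝ) + 1) := by positivity
  have hlim (ν : Measure ℝ) [IsProbabilityMeasure ν] :=
    tendsto_integral_thickenedIndicator_of_isClosed ν hF hδ tendsto_one_div_add_atTop_nhds_zero_nat
  refine le_of_tendsto_of_tendsto' (hlim (μ.map (· + h))) ((hlim μ).add_const κ) fun n => ?_
  have hcont : Continuous fun s : ℝ => (thickenedIndicator (hδ n) F s : ℝ) :=
    NNReal.continuous_coe.comp (thickenedIndicator (hδ n) F).continuous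
  rw [integral_map (by fun_prop) hcont.aestronglyMeasurable]
  exact H.integral_comp_add_le hh hcont fun s =>
    ⟨NNReal.coe_nonneg _, NNReal.coe_le_one.mpr (thickenedIndicator_le_one (hδ n) F s)⟩

lemma measureReal_map_add_le (H : HasDerivTestBound μ ε κ) (hh : |h| ≤ ε) {A : Set ℝ}
    (hA : MeasurableSet A) : (μ.map (· + h)).real A ≤ μ.real A + κ := by
  have : IsProbabilityMeasure (μ.map (· + h)) := Measure.isProbabilityMeasure_map (by fun_prop)
  refine le_of_forall_pos_le_add fun δ hδ => ?_
  obtain ⟨F, hFA, hF, hlt⟩ := hA.exists_isClosed_lt_add (μ := μ.map (· + h))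
    (measure_ne_top _ _) (ENNReal.ofReal_pos.mpr hδ).ne'
  have hinner : (μ.map (· + h)).real A ≤ (μ.map (· + h)).real F + δ := by
    have hle := ENNReal.toReal_mono (by finiteness) hlt.le
    rwa [ENNReal.toReal_add (by finiteness) (by finiteness), ENNReal.toReal_ofReal hδ.le] at hle
  linarith [H.measureReal_map_add_le_of_isClosed hh hF, measureReal_mono (μ := μ) hFA]

lemma abs_measureReal_map_add_sub_le (H : HasDerivTestBound μ ε κ) (hh : |h| ≤ ε) {A : Set ℝ}
    (hA : MeasurableSet A) : |(μ.map (· + h)).real A - μ.real A| ≤ κ := by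
  have : IsProbabilityMeasure (μ.map (· + h)) := Measure.isProbabilityMeasure_map (by fun_prop)
  have hupper := H.measureReal_map_add_le hh hA
  have hlower := H.measureReal_map_add_le hh hA.compl
  rw [probReal_compl_eq_one_sub hA, probReal_compl_eq_one_sub hA] at hlower
  exact abs_le.mpr ⟨by linarith, by linarith⟩

lemma absolutelyContinuous {κ : ℝ → ℝ} (H : ∀ ε, 0 < ε → HasDerivTestBound μ ε (κ ε))
    (hκ : Filter.Tendsto κ (nhdsWithin 0 (Set.Ioi 0)) (nhds 0)) : μ ≪ volume := by
  refine absolutelyContinuous_of_tendsto_map_add fun A hA =>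
    Metric.tendsto_nhds_nhds.mpr fun δ hδ => ?_
  obtain ⟨ε, hκε, hε⟩ := ((hκ.eventually (gt_mem_nhds hδ)).and self_mem_nhdsWithin).exists
  refine ⟨ε, hε, fun {h} hh => ?_⟩
  rw [dist_zero_right, Real.norm_eq_abs] at hh
  exact ((H ε hε).abs_measureReal_map_add_sub_le hh.le hA).trans_lt hκε

lemma omegaMod_rnDeriv_le (H : HasDerivTestBound μ ε κ) (hμ : μ ≪ volume) (hε : 0 ≤ ε) :
    omegaMod (fun s => (μ.rnDeriv volume s).toReal) ε ≤ 2 * κ := by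
  refine csSup_le ⟨_, 0, by simpa using hε, rfl⟩ ?_
  rintro _ ⟨h, hh, rfl⟩
  have : Measurable fun s => (μ.rnDeriv volume s).toReal :=
    (Measure.measurable_rnDeriv _ _).ennreal_toReal
  have hint : Integrable fun s => (μ.rnDeriv volume s).toReal := Measure.integrable_toReal_rnDeriv
  refine integral_abs_le_two_mul_of_forall_abs_setIntegral_le (by fun_prop)
    ((hint.comp_add_right h).sub hint) fun A hA => ?_
  rw [integral_sub (hint.comp_add_right h).integrableOn hint.integrableOn,
    ← measureReal_map_add_neg_eq_setIntegral hμ h hA, Measure.setIntegral_toReal_rnDeriv hμ]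
  exact H.abs_measureReal_map_add_sub_le (by rwa [abs_neg]) hA

lemma exists_density_omegaMod_le {κ : ℝ → ℝ} (H : ∀ ε, 0 < ε → HasDerivTestBound μ ε (κ ε))
    (hκ : Filter.Tendsto κ (nhdsWithin 0 (Set.Ioi 0)) (nhds 0)) :
    ∃ ρ : ℝ → ℝ, Integrable ρ ∧ μ = volume.withDensity (fun s => ENNReal.ofReal (ρ s)) ∧
      ∀ ε, 0 < ε → omegaMod ρ ε ≤ 2 * κ ε := by
  have hμ : μ ≪ volume := absolutelyContinuous H hκ
  refine ⟨fun s => (μ.rnDeriv volume s).toReal, Measure.integrable_toReal_rnDeriv, ?_,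
    fun ε hε => (H ε hε).omegaMod_rnDeriv_le hμ hε.le⟩
  refine (Measure.withDensity_rnDeriv_eq μ volume hμ).symm.trans (withDensity_congr_ae ?_)
  filter_upwards [Measure.rnDeriv_lt_top μ volume] with s hs
  rw [ENNReal.ofReal_toReal hs.ne]

end HasDerivTestBound

lemma tendsto_rate {m : ℕ} (hm : 1 ≤ m) (d : ℕ) :
    Filter.Tendsto (rate m d) (nhdsWithin 0 (Set.Ioi 0)) (nhds 0) := by
  have hp : (0 : ℝ) < (m : ℝ)⁻¹ := by positivity
  have hpow : Filter.Tendsto (fun t : ℝ => t ^ (m : ℝ)⁻¹) (nhdsWithin 0 (Set.Ioi 0)) (nhds 0) := by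
    have hcont := (Real.continuousAt_rpow_const 0 (m : ℝ)⁻¹ (Or.inr hp.le)).tendsto
    rw [Real.zero_rpow hp.ne'] at hcont
    exact hcont.mono_left nhdsWithin_le_nhds
  have hlog : Filter.Tendsto (fun t : ℝ => t ^ (m : ℝ)⁻¹ * |Real.log t| ^ (d - m))
      (nhdsWithin 0 (Set.Ioi 0)) (nhds 0) := by
    refine (isLittleO_abs_log_rpow_rpow_nhdsGT_zero ((d - m : ℕ) : ℝ)
      (neg_lt_zero.mpr hp)).tendsto_div_nhds_zero.congr' ?_
    filter_upwards [self_mem_nhdsWithin] with t (ht : 0 < t)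
    rw [Real.rpow_neg ht.le, div_inv_eq_mul, Real.rpow_natCast, mul_comm]
  have hsum := hlog.add hpow
  rw [add_zero] at hsum
  exact hsum.congr fun t => by rw [rate, mul_add, mul_one]

lemma tendsto_rate_div {m : ℕ} (hm : 1 ≤ m) (d : ℕ) {a : ℝ} (ha : 0 < a) :
    Filter.Tendsto (fun ε => rate m d (ε / a)) (nhdsWithin 0 (Set.Ioi 0)) (nhds 0) := by
  refine (tendsto_rate hm d).comp (tendsto_nhdsWithin_iff.mpr ⟨?_, ?_⟩)
  · exact ((continuous_id.div_const a).tendsto' 0 0 (zero_div a)).mono_left nhdsWithin_le_nhds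
  · filter_upwards [self_mem_nhdsWithin] with ε hε using div_pos hε ha

lemma exists_abs_coeff_eq_topCoeff {n : ℕ} {f : MvPolynomial (Fin n) ℝ} (hf : f ≠ 0) :
    ∃ j : Fin n →₀ ℕ, j.degree = f.totalDegree ∧ |f.coeff j| = topCoeff f ∧ 0 < topCoeff f := by
  set S : Set ℝ := {c : ℝ | ∃ j : Fin n →₀ ℕ, (j.sum fun _ e => e) = f.totalDegree ∧
    c = |MvPolynomial.coeff j f|}
  have hfin : S.Finite := by
    refine ((f.support.finite_toSet.image fun j => |f.coeff j|).insert 0).subset ?_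
    rintro _ ⟨j, -, rfl⟩
    by_cases hj : f.coeff j = 0
    · simp [hj]
    · exact Or.inr ⟨j, MvPolynomial.mem_support_iff.mpr hj, rfl⟩
  obtain ⟨k, hk, hkdeg⟩ : ∃ k ∈ f.support, f.totalDegree = k.sum fun _ e => e :=
    Finset.exists_mem_eq_sup _ (MvPolynomial.support_nonempty.mpr hf) _
  have hkS : |f.coeff k| ∈ S := ⟨k, hkdeg.symm, rfl⟩
  obtain ⟨j, hj, hjtop⟩ : topCoeff f ∈ S := Set.Nonempty.csSup_mem ⟨_, hkS⟩ hfin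
  exact ⟨j, hj, hjtop.symm,
    (abs_pos.mpr (MvPolynomial.mem_support_iff.mp hk)).trans_le (le_csSup hfin.bddAbove hkS)⟩

/-- Theorem 1.1 (main theorem): for fixed `m ≤ d` there is a constant `C(m,d)` such that for
every non-constant polynomial `f` on `ℝⁿ` of total degree at most `d` in which every variable
enters to a power at most `m`, the distribution of `f(X)` (with `X` standard Gaussian in `ℝⁿ`)
has a density `ϱ_f` with
`ω(ϱ_f, ε) ≤ C(m,d) (ε/a[f])^{1/m} (|ln(ε/a[f])|^{d-m} + 1)` for all `ε > 0`. -/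
theorem main_theorem (m d : ℕ) (hm : 1 ≤ m) (hmd : m ≤ d) :
    ∃ C : ℝ, 0 < C ∧
      ∀ (n : ℕ) (f : MvPolynomial (Fin n) ℝ),
        f.totalDegree ≠ 0 →
        (∀ i : Fin n, f.degreeOf i ≤ m) →
        f.totalDegree ≤ d →
        ∃ ρ : ℝ → ℝ, Integrable ρ ∧
          (stdGaussian n).map (fun x => MvPolynomial.eval x f)
            = volume.withDensity (fun s => ENNReal.ofReal (ρ s)) ∧
          ∀ ε : ℝ, 0 < ε →
            omegaMod ρ ε ≤
              C * (ε / topCoeff f) ^ ((1 : ℝ) / m) *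
                (|Real.log (ε / topCoeff f)| ^ (d - m) + 1) := by
  refine ⟨2 * rateConst m d, by linarith [one_le_rateConst hm d], fun n f hf hdegOf hdeg => ?_⟩
  have hmeas : Measurable fun x => MvPolynomial.eval x f := measurable_eval_mvPolynomial f
  obtain ⟨j, hj, hjtop, htop⟩ := exists_abs_coeff_eq_topCoeff (f := f) (by rintro rfl; simp at hf)
  have : IsProbabilityMeasure ((gaussianPi (Fin n)).map fun x => MvPolynomial.eval x f) :=
    Measure.isProbabilityMeasure_map hmeas.aemeasurable
  have htest (ε : ℝ) (hε : 0 < ε) : HasDerivTestBound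
      ((gaussianPi (Fin n)).map fun x => MvPolynomial.eval x f) ε
      (rateConst m d * rate m d (ε / topCoeff f)) := fun φ φ' hφ => by
    rw [integral_map hmeas.aemeasurable hφ.continuous_deriv.aestronglyMeasurable]
    exact hφ.abs_integral_eval_gaussianPi_le_rate hm (Nat.one_le_iff_ne_zero.mpr hf) hdeg hdegOf
      le_rfl hj hε htop hjtop.ge
  have hlim : Filter.Tendsto (fun ε => rateConst m d * rate m d (ε / topCoeff f))
      (nhdsWithin 0 (Set.Ioi 0)) (nhds 0) := by
    simpa using (tendsto_rate_div hm d htop).const_mul (rateConst m d)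
  obtain ⟨ρ, hρ, hdensity, homega⟩ := HasDerivTestBound.exists_density_omegaMod_le htest hlim
  refine ⟨ρ, hρ, hdensity, fun ε hε => (homega ε hε).trans_eq ?_⟩
  rw [rate, one_div]
  ring
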